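/- For every fixed positive integer s, there are, up to isomorphism, only finitely many Gorenstein polytopes of degree s (of arbitrary dimension) that are not lattice pyramids. -/

import Mathlib

open Pointwise

/-- A point of `ℝ^d` is a lattice point if all its coordinates are integers. -/
def IsLatticePt {d : ℕ} (x : Fin d → ℝ) : Prop := ∀ i, ∃ z : ℤ, x i = (z : ℝ)

/-- A lattice polytope is the (non-empty) convex hull of finitely many lattice points. -/
def IsLatticePolytope {d : ℕ} (P : Set (Fin d → ℝ)) : Prop :=
  ∃ V : Finset (Fin d → ℝ), V.Nonempty ∧ (∀ v ∈ V, IsLatticePt v) ∧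
    P = convexHull ℝ (V : Set (Fin d → ℝ))

/-- The dimension of a polytope: the dimension of the direction of its affine hull. -/
noncomputable def polyDim {d : ℕ} (P : Set (Fin d → ℝ)) : ℕ :=
  Module.finrank ℝ (affineSpan ℝ P).direction

/-- A polytope is hollow if its relative interior contains no lattice point. -/
def IsHollow {d : ℕ} (P : Set (Fin d → ℝ)) : Prop :=
  ∀ x ∈ intrinsicInterior ℝ P, ¬ IsLatticePt x

/-- A facet of `P`: a non-empty exposed face of dimension `dim P - 1`. -/
def IsFacet {d : ℕ} (P F : Set (Fin d → ℝ)) : Prop :=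
  IsExposed ℝ P F ∧ F.Nonempty ∧ polyDim F + 1 = polyDim P

/-- An affine functional is integral on `P` if it takes integer values on all
lattice points of the affine hull of `P`. -/
def IsIntegralOn {d : ℕ} (P : Set (Fin d → ℝ)) (u : (Fin d → ℝ) →ᵃ[ℝ] ℝ) : Prop :=
  ∀ y ∈ affineSpan ℝ P, IsLatticePt y → ∃ z : ℤ, u y = (z : ℝ)

/-- `P` is reflexive: there is a lattice point `x` in the relative interior of `P`
such that every facet of `P` has lattice distance one from `x`, i.e. for every facet `F`
there is an integral affine functional that is constant on `F` and exceeds its value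
at `x` by exactly `1`. -/
def IsReflexivePolytope {d : ℕ} (P : Set (Fin d → ℝ)) : Prop :=
  ∃ x ∈ intrinsicInterior ℝ P, IsLatticePt x ∧
    ∀ F : Set (Fin d → ℝ), IsFacet P F →
      ∃ u : (Fin d → ℝ) →ᵃ[ℝ] ℝ, IsIntegralOn P u ∧ ∀ f ∈ F, u f = u x + 1

/-- `P` is Gorenstein if some positive integer multiple `r • P` is reflexive. -/
def IsGorenstein {d : ℕ} (P : Set (Fin d → ℝ)) : Prop :=
  ∃ r : ℕ, 0 < r ∧ IsReflexivePolytope ((r : ℝ) • P)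

/-- `P` is Gorenstein of codegree `r` if `r • P` is reflexive (`r` positive). -/
def IsGorensteinOfCodeg {d : ℕ} (P : Set (Fin d → ℝ)) (r : ℕ) : Prop :=
  0 < r ∧ IsReflexivePolytope ((r : ℝ) • P)

/-- The codegree of `P`: the smallest positive integer `r` such that `r • P` is not hollow. -/
noncomputable def polyCodeg {d : ℕ} (P : Set (Fin d → ℝ)) : ℕ :=
  sInf {r : ℕ | 0 < r ∧ ¬ IsHollow ((r : ℝ) • P)}

/-- The degree of `P`: `dim P + 1 - codeg P`. -/
noncomputable def polyDeg {d : ℕ} (P : Set (Fin d → ℝ)) : ℕ :=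
  polyDim P + 1 - polyCodeg P

/-- Unimodular equivalence of lattice polytopes: an affine map carrying `P` onto `Q`,
with an affine inverse on affine hulls, such that both maps preserve lattice points of
the affine hulls. -/
def LatticeIso {d e : ℕ} (P : Set (Fin d → ℝ)) (Q : Set (Fin e → ℝ)) : Prop :=
  ∃ (f : (Fin d → ℝ) →ᵃ[ℝ] (Fin e → ℝ)) (g : (Fin e → ℝ) →ᵃ[ℝ] (Fin d → ℝ)),
    f '' P = Q ∧ g '' Q = P ∧
    (∀ x ∈ affineSpan ℝ P, g (f x) = x) ∧ (∀ y ∈ affineSpan ℝ Q, f (g y) = y) ∧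
    (∀ x ∈ affineSpan ℝ P, IsLatticePt x → IsLatticePt (f x)) ∧
    (∀ y ∈ affineSpan ℝ Q, IsLatticePt y → IsLatticePt (g y))

/-- The lattice pyramid `conv(P' × {0}, (0,1))` over `P' ⊆ ℝ^m`. -/
def pyramidOver {m : ℕ} (P' : Set (Fin m → ℝ)) : Set (Fin (m + 1) → ℝ) :=
  convexHull ℝ ((fun x => Fin.snoc x (0 : ℝ)) '' P' ∪ {Fin.snoc (0 : Fin m → ℝ) (1 : ℝ)})

/-- `P` is a lattice pyramid if it is a single lattice point or is isomorphic to a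
lattice pyramid over a lattice polytope. -/
def IsLatticePyramid {d : ℕ} (P : Set (Fin d → ℝ)) : Prop :=
  (∃ x : Fin d → ℝ, IsLatticePt x ∧ P = {x}) ∨
  ∃ (m : ℕ) (P' : Set (Fin m → ℝ)), IsLatticePolytope P' ∧ LatticeIso P (pyramidOver P')

/-- The Cayley polytope `P_1 * ⋯ * P_l ⊆ ℝ^{n+l}` of `P_1, …, P_l ⊆ ℝ^n`:
the convex hull of the sets `P_i × {e_i}`. -/
def cayley {n l : ℕ} (P : Fin l → Set (Fin n → ℝ)) : Set (Fin (n + l) → ℝ) :=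
  convexHull ℝ (⋃ i : Fin l, (fun x => Fin.append x (Pi.single i (1 : ℝ))) '' P i)

/-- The Cayley polytope `F * G ⊆ ℝ^{n+2}` of two polytopes `F, G ⊆ ℝ^n`. -/
def cayleyTwo {n : ℕ} (F G : Set (Fin n → ℝ)) : Set (Fin (n + 2) → ℝ) :=
  convexHull ℝ
    ((fun x => Fin.append x ![(1 : ℝ), 0]) '' F ∪ (fun x => Fin.append x ![(0 : ℝ), 1]) '' G)

/-- `P` is a Cayley join of `F` and `G` if `P ≅ F * G` and `dim F + dim G = dim P - 1`. -/
def IsCayleyJoin {d n : ℕ} (P : Set (Fin d → ℝ)) (F G : Set (Fin n → ℝ)) : Prop :=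
  LatticeIso P (cayleyTwo F G) ∧ polyDim F + polyDim G + 1 = polyDim P

/-- `P` is reducible with factors `F` and `G`: a Cayley join with
`codeg F + codeg G = codeg P`. -/
def IsReducibleWith {d n : ℕ} (P : Set (Fin d → ℝ)) (F G : Set (Fin n → ℝ)) : Prop :=
  IsCayleyJoin P F G ∧ polyCodeg F + polyCodeg G = polyCodeg P

/-- `P` is reducible: it is a single lattice point (by convention) or is reducible
with some factors `F` and `G` which are lattice polytopes. -/
def IsReducible {d : ℕ} (P : Set (Fin d → ℝ)) : Prop :=
  (∃ x : Fin d → ℝ, IsLatticePt x ∧ P = {x}) ∨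
  ∃ (n : ℕ) (F G : Set (Fin n → ℝ)), IsLatticePolytope F ∧ IsLatticePolytope G ∧
    IsReducibleWith P F G

/-- `P` is a Cayley polytope: a single lattice point, or isomorphic to a Cayley polytope
of `l > 1` lattice polytopes. -/
def IsCayleyPolytope {d : ℕ} (P : Set (Fin d → ℝ)) : Prop :=
  (∃ x : Fin d → ℝ, IsLatticePt x ∧ P = {x}) ∨
  ∃ (n l : ℕ) (Q : Fin l → Set (Fin n → ℝ)), 1 < l ∧ (∀ i, IsLatticePolytope (Q i)) ∧
    LatticeIso P (cayley Q)

/-- `P` is IDP if for every `k ≥ 2` every lattice point of `k • P` is a sum of `k`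
lattice points of `P`. -/
def IsIDP {d : ℕ} (P : Set (Fin d → ℝ)) : Prop :=
  ∀ k : ℕ, 2 ≤ k → ∀ x : Fin d → ℝ, IsLatticePt x → x ∈ (k : ℝ) • P →
    ∃ p : Fin k → (Fin d → ℝ), (∀ i, p i ∈ P ∧ IsLatticePt (p i)) ∧ x = ∑ i, p i

/-- The standard simplex `Δ_s = conv(0, e_1, …, e_s) ⊆ ℝ^s`. -/
def stdSimplexLP (s : ℕ) : Set (Fin s → ℝ) :=
  convexHull ℝ (insert 0 (Set.range fun i : Fin s => Pi.single i (1 : ℝ)))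

/-- The product of `F ⊆ ℝ^m` and `G ⊆ ℝ^n` inside `ℝ^{m+n}`. -/
def prodPoly {m n : ℕ} (F : Set (Fin m → ℝ)) (G : Set (Fin n → ℝ)) : Set (Fin (m + n) → ℝ) :=
  (fun p : (Fin m → ℝ) × (Fin n → ℝ) => Fin.append p.1 p.2) '' (F ×ˢ G)

/-- The free join `conv(F × 0 × {0} ∪ 0 × G × {1}) ⊆ ℝ^m × ℝ^n × ℝ`. -/
def freeJoin {m n : ℕ} (F : Set (Fin m → ℝ)) (G : Set (Fin n → ℝ)) :
    Set (Fin (m + n + 1) → ℝ) :=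
  convexHull ℝ
    ((fun x => Fin.snoc (Fin.append x (0 : Fin n → ℝ)) (0 : ℝ)) '' F ∪
     (fun y => Fin.snoc (Fin.append (0 : Fin m → ℝ) y) (1 : ℝ)) '' G)


structure GData {U V : Type} [Fintype U] [Fintype V] (a : U → V → ℕ) (l : V → ℝ) (m : U → ℝ)
    (r : ℕ) : Prop where
  hl : ∀ v, 0 < l v
  hm : ∀ u, 0 < m u
  h1 : ∀ u, ∑ v, (a u v : ℝ) * l v = 1
  h2 : ∀ v, ∑ u, m u * (a u v : ℝ) = 1
  hr : ∑ v, l v = r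

/-- total weight identity -/
theorem GData.tot {U V : Type} [Fintype U] [Fintype V] {a : U → V → ℕ} {l : V → ℝ} {m : U → ℝ}
    {r : ℕ} (D : GData a l m r) (c : U → ℝ) :
    ∑ u, c u = ∑ v, (∑ u, c u * (a u v : ℝ)) * l v := by
  simp_rw [Finset.sum_mul]
  rw [Finset.sum_comm]
  refine Finset.sum_congr rfl fun u _ => ?_
  simp_rw [mul_assoc]
  rw [← Finset.mul_sum, D.h1, mul_one]

theorem GData.symm {U V : Type} [Fintype U] [Fintype V] {a : U → V → ℕ} {l : V → ℝ} {m : U → ℝ}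
    {r : ℕ} (D : GData a l m r) : GData (fun v u => a u v) m l r where
  hl := D.hm
  hm := D.hl
  h1 := fun v => by simpa [mul_comm] using D.h2 v
  h2 := fun u => by simpa [mul_comm] using D.h1 u
  hr := by
    rw [D.tot m]
    simp [D.h2, D.hr]

theorem GData.indep {U V : Type} [Fintype U] [Fintype V] {a : U → V → ℕ} {l : V → ℝ}
    {m : U → ℝ} {r : ℕ} (D : GData a l m r) (u0 : U) :
    ∀ (n : ℕ) (m' : U → ℝ), (∀ u, 0 ≤ m' u) → 0 < m' u0 → (∀ v, ∑ u, m' u * (a u v : ℝ) = 1) →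
      {u | 0 < m' u}.ncard = n →
    ∃ m' : U → ℝ, (∀ u, 0 ≤ m' u) ∧ 0 < m' u0 ∧ (∀ v, ∑ u, m' u * (a u v : ℝ) = 1) ∧
      LinearIndepOn ℝ (fun u v => (a u v : ℝ)) {u | 0 < m' u} := by
  classical
  intro n
  induction n using Nat.strong_induction_on with
  | _ n ih =>
  intro m' hm0 hmu hm1 hn
  by_cases hli : LinearIndepOn ℝ (fun u v => (a u v : ℝ)) {u | 0 < m' u}
  · exact ⟨m', hm0, hmu, hm1, hli⟩
  have hS : ({u | 0 < m' u} : Set U) = ((Finset.univ.filter fun u => 0 < m' u : Finset U) : Set U) := by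
    ext; simp
  have : ∃ c : U → ℝ, (∀ u, m' u = 0 → c u = 0) ∧ (∀ v, ∑ u, c u * (a u v : ℝ) = 0) ∧ ∃ u, c u ≠ 0 := by
    rw [hS, linearIndepOn_finset_iff] at hli
    push Not at hli
    obtain ⟨f, hf, i, hi, hfi⟩ := hli
    refine ⟨fun u => if 0 < m' u then f u else 0, fun u hu => by simp [hu], fun v => ?_, i, ?_⟩
    · have := congrFun hf v
      simp only [Finset.sum_apply, Pi.smul_apply, smul_eq_mul, Pi.zero_apply] at this
      rw [Finset.sum_filter] at this
      refine Eq.trans (Finset.sum_congr rfl fun u _ => ?_) this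
      by_cases h : 0 < m' u <;> simp [h]
    · simp at hi; simp [hi, hfi]
  have : ∃ c : U → ℝ, (∀ u, m' u = 0 → c u = 0) ∧ (∀ v, ∑ u, c u * (a u v : ℝ) = 0) ∧
      (∃ u, c u ≠ 0) ∧ 0 ≤ c u0 := by
    obtain ⟨c, h1, h2, u, h3⟩ := this
    rcases le_total 0 (c u0) with h | h
    · exact ⟨c, h1, h2, ⟨u, h3⟩, h⟩
    · exact ⟨fun u => - c u, fun u hu => by simp [h1 u hu], fun v => by simp [h2 v],
        ⟨u, by simpa using h3⟩, by simpa using h⟩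
  obtain ⟨c, hc1, hc2, ⟨u2, hc3⟩, hc0⟩ := this
  have hsum : ∑ u, c u = 0 := by rw [D.tot c]; simp [hc2]
  have hneg : (Finset.univ.filter fun u => c u < 0).Nonempty := by
    by_contra hne
    rw [Finset.not_nonempty_iff_eq_empty, Finset.filter_eq_empty_iff] at hne
    have := (Finset.sum_eq_zero_iff_of_nonneg (fun u hu => not_lt.1 (hne hu))).1 hsum u2 (by simp)
    exact hc3 this
  obtain ⟨u1, hu1, hmin⟩ := Finset.exists_min_image _ (fun u => m' u / (- c u)) hneg
  simp only [Finset.mem_filter, Finset.mem_univ, true_and] at hu1 hmin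
  set t := m' u1 / (- c u1) with ht
  have ht0 : 0 ≤ t := div_nonneg (hm0 _) (by linarith)
  have hz : m' u1 + t * c u1 = 0 := by rw [ht, div_neg, neg_mul, div_mul_cancel₀ _ hu1.ne]; ring
  refine ih ({u | 0 < m' u + t * c u}.ncard) ?_ (fun u => m' u + t * c u) ?_ ?_ ?_ rfl
  · rw [← hn]
    refine Set.ncard_lt_ncard ?_ (Set.toFinite _)
    refine ⟨fun u hu => ?_, fun h => ?_⟩
    · simp only [Set.mem_ofPred_eq] at hu ⊢
      rcases (hm0 u).eq_or_lt with h | h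
      · rw [hc1 u h.symm, ← h] at hu; simp at hu
      · exact h
    · have h1 : u1 ∈ {u | 0 < m' u} := by
        rcases (hm0 u1).eq_or_lt with h | h
        · rw [hc1 u1 h.symm] at hu1; simp at hu1
        · exact h
      have := h h1
      simp [hz] at this
  · intro u
    rcases lt_or_ge (c u) 0 with h | h
    · have := hmin u h
      rw [le_div_iff₀ (by linarith)] at this
      linarith
    · have := hm0 u
      positivity
  · have : 0 ≤ t * c u0 := by positivity
    linarith
  · intro v
    simp only [add_mul, Finset.sum_add_distrib, hm1, mul_assoc, ← Finset.mul_sum, hc2]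
    simp

/-- Key minimality. -/
theorem GData.key {U V : Type} [Fintype U] [Fintype V] {a : U → V → ℕ} {l : V → ℝ}
    {m : U → ℝ} {r : ℕ} (D : GData a l m r) (m' : U → ℝ) (hm0 : ∀ u, 0 ≤ m' u)
    (hm1 : ∀ v, ∑ u, m' u * (a u v : ℝ) = 1) (y : U → ℝ) (hy0 : ∀ u, 0 ≤ y u)
    (hy : ∀ u, 0 < m' u → 0 < y u) (j : ℤ) (b : U → ℤ) (hyb : ∀ u, y u = j * m' u - b u) :
    (r : ℝ) ≤ ∑ u, y u ∧ (∑ u, y u = r → ∀ v, ∑ u, y u * (a u v : ℝ) = 1) := by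
  have hge : ∀ v, 1 ≤ ∑ u, y u * (a u v : ℝ) := by
    intro v
    have hint : ∑ u, y u * (a u v : ℝ) = ((j - ∑ u, b u * (a u v : ℤ) : ℤ) : ℝ) := by
      simp only [hyb, sub_mul, Finset.sum_sub_distrib, mul_assoc, ← Finset.mul_sum, hm1]
      push_cast; ring
    have hpos : 0 < ∑ u, y u * (a u v : ℝ) := by
      have : ∃ u, 0 < m' u * (a u v : ℝ) := by
        by_contra hne
        push Not at hne
        have := Finset.sum_nonpos (fun u (_ : u ∈ Finset.univ) => hne u)
        rw [hm1] at this; linarith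
      obtain ⟨u, hu⟩ := this
      have ha : 0 < (a u v : ℝ) := pos_of_mul_pos_right hu (hm0 u)
      have hmu : 0 < m' u := pos_of_mul_pos_left hu ha.le
      refine Finset.sum_pos' (fun u _ => mul_nonneg (hy0 u) (by positivity)) ⟨u, by simp, ?_⟩
      exact mul_pos (hy u hmu) ha
    rw [hint] at hpos ⊢
    exact_mod_cast hpos
  have htot := D.tot y
  have hle : ∀ v ∈ Finset.univ, l v ≤ (∑ u, y u * (a u v : ℝ)) * l v := fun v _ =>
    le_mul_of_one_le_left (D.hl v).le (hge v)
  refine ⟨?_, fun h v => ?_⟩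
  · rw [htot, ← D.hr]
    exact Finset.sum_le_sum hle
  · rw [htot, ← D.hr] at h
    have := (Finset.sum_eq_sum_iff_of_le hle).1 h.symm v (by simp)
    have hl := D.hl v
    have h3 : (∑ u, y u * (a u v : ℝ) - 1) * l v = 0 := by linarith
    rcases mul_eq_zero.1 h3 with h | h
    · linarith
    · exact absurd h hl.ne'

theorem GData.card_le {U V : Type} [Fintype U] [Fintype V] {a : U → V → ℕ} {n : ℕ}
    (hrank : (Matrix.of fun u v => (a u v : ℝ)).rank ≤ n) (S : Finset U)
    (hS : LinearIndepOn ℝ (fun u v => (a u v : ℝ)) (S : Set U)) : S.card ≤ n := by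
  classical
  refine le_trans ?_ hrank
  rw [Matrix.rank_eq_finrank_span_row]
  have h1 := finrank_span_eq_card (R := ℝ) hS
  simp only [Finset.coe_sort_coe, Fintype.card_coe] at h1
  rw [← h1]
  refine Submodule.finrank_mono (Submodule.span_mono ?_)
  rintro _ ⟨x, rfl⟩
  exact ⟨x.1, rfl⟩

/-- structure of independent representations -/
theorem GData.struct {U V : Type} [Fintype U] [Fintype V] {a : U → V → ℕ} {l : V → ℝ}
    {m : U → ℝ} {r s : ℕ} (D : GData a l m r) (u0 : U)
    (hrank : (Matrix.of fun u v => (a u v : ℝ)).rank ≤ r + s) :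
    ∃ m' : U → ℝ, (∀ u, 0 ≤ m' u) ∧ (∀ u, m' u ≤ 1) ∧ (∀ v, ∑ u, m' u * (a u v : ℝ) = 1) ∧
      (Finset.univ.filter fun u => 0 < m' u ∧ m' u < 1).card ≤ 2 * s ∧
      r ≤ (Finset.univ.filter fun u => m' u = 1).card + s := by
  classical
  obtain ⟨m', h0, -, h1, hli⟩ := D.indep u0 _ m (fun u => (D.hm u).le) (D.hm u0) D.h2 rfl
  have hsum : ∑ u, m' u = r := by rw [D.tot m']; simp [h1, D.hr]
  have hle1 : ∀ u, m' u ≤ 1 := by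
    -- y = m' - ceil m' + 1 on the support
    have := (D.key m' h0 h1 (fun u => if 0 < m' u then m' u - ⌈m' u⌉ + 1 else 0) ?_ ?_ 1
      (fun u => if 0 < m' u then ⌈m' u⌉ - 1 else 0) ?_).1
    · rw [← hsum] at this
      by_contra hne
      push Not at hne
      obtain ⟨u, hu⟩ := hne
      refine absurd this (not_le.2 (Finset.sum_lt_sum (fun u _ => ?_) ⟨u, by simp, ?_⟩))
      · split_ifs with h
        · have : (1 : ℝ) ≤ ⌈m' u⌉ := by exact_mod_cast Int.one_le_ceil_iff.2 h
          linarith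
        · exact h0 u
      · rw [if_pos (by linarith)]
        have := Int.le_ceil (m' u)
        linarith
    · intro u
      split_ifs
      · have := Int.ceil_lt_add_one (m' u); linarith
      · rfl
    · intro u hu
      rw [if_pos hu]
      have := Int.ceil_lt_add_one (m' u); linarith
    · intro u
      split_ifs with h
      · push_cast; ring
      · have := h0 u
        push_cast
        linarith
  -- second test vector
  have hkey := (D.key m' h0 h1 (fun u => if 0 < m' u ∧ m' u < 1 then 1 - m' u else m' u) ?_ ?_ (-1)
      (fun u => if 0 < m' u ∧ m' u < 1 then -1 else if m' u = 1 then -2 else 0) ?_).1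
  · refine ⟨m', h0, hle1, h1, ?_⟩
    set F := Finset.univ.filter fun u => 0 < m' u ∧ m' u < 1 with hF
    set O := Finset.univ.filter fun u => m' u = 1 with hO
    have hdisj : Disjoint F O := by
      rw [Finset.disjoint_left]; intro u hu hu'
      simp [hF, hO] at hu hu'
      linarith [hu.2]
    have hcard : (F ∪ O).card ≤ r + s := by
      refine GData.card_le hrank _ (hli.mono ?_)
      intro u hu
      simp [hF, hO] at hu ⊢
      rcases hu with hu | hu
      · exact hu.1
      · rw [hu]; exact one_pos
    rw [Finset.card_union_of_disjoint hdisj] at hcard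
    have hsplit : ∀ g : U → ℝ, (∀ u, m' u = 0 → g u = 0) → ∑ u, g u = ∑ u ∈ F, g u + ∑ u ∈ O, g u := by
      intro g hg
      rw [← Finset.sum_union hdisj]
      symm
      refine Finset.sum_subset (Finset.subset_univ _) ?_
      intro u _ hu
      apply hg
      simp only [hF, hO, Finset.mem_union, Finset.mem_filter, Finset.mem_univ, true_and, not_or, not_and, not_lt] at hu
      rcases (h0 u).eq_or_lt with h | h
      · exact h.symm
      · exact absurd (le_antisymm (hle1 u) (hu.1 h)) hu.2
    rw [hsplit _ (fun u hu => by simp [hu])] at hkey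
    rw [hsplit _ (fun u hu => hu)] at hsum
    have e1 : ∑ u ∈ O, m' u = O.card := by
      rw [Finset.sum_congr rfl (g := fun _ => (1:ℝ))]
      · simp
      · intro u hu; simpa [hO] using hu
    have e2 : ∑ u ∈ O, (if 0 < m' u ∧ m' u < 1 then 1 - m' u else m' u) = O.card := by
      rw [← e1]
      refine Finset.sum_congr rfl fun u hu => ?_
      have : m' u = 1 := by simpa [hO] using hu
      simp [this]
    have e3 : ∑ u ∈ F, (if 0 < m' u ∧ m' u < 1 then 1 - m' u else m' u) = F.card - ∑ u ∈ F, m' u := by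
      rw [Finset.sum_congr rfl (g := fun u => 1 - m' u)]
      · simp
      · intro u hu
        have : 0 < m' u ∧ m' u < 1 := by simpa [hF] using hu
        rw [if_pos this]
    rw [e2, e3] at hkey
    rw [e1] at hsum
    have hc : (F.card : ℝ) + O.card ≤ r + s := by exact_mod_cast hcard
    constructor
    · have : (F.card : ℝ) ≤ 2 * s := by linarith
      exact_mod_cast this
    · have : (r : ℝ) ≤ O.card + s := by linarith
      exact_mod_cast this
  · intro u
    split_ifs with h
    · linarith [h.2]
    · exact h0 u
  · intro u hu
    split_ifs with h
    · linarith [h.2]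
    · exact hu
  · intro u
    split_ifs with h h'
    · push_cast; ring
    · rw [h']; push_cast; ring
    · have : m' u = 0 := by
        by_contra hne
        have hp := lt_of_le_of_ne (h0 u) (Ne.symm hne)
        exact h ⟨hp, lt_of_le_of_ne (hle1 u) h'⟩
      simp [this]
theorem peel_lemma {ι E : Type} [DecidableEq ι] [AddCommGroup E] [Module ℝ E] [FiniteDimensional ℝ E]
    (d : ι → E) : ∀ (n : ℕ) (A : Finset ι), A.card = n → (∀ i ∈ A, d i ≠ 0) →
    (∀ B ⊆ A, ∑ i ∈ B, d i ≠ 0 → ∃ i ∈ B, d i ∉ Submodule.span ℝ (d '' (B.erase i : Finset ι))) →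
    A.card ≤ 2 * Module.finrank ℝ (Submodule.span ℝ (d '' (A : Set ι))) := by
  intro n
  induction n using Nat.strong_induction_on with
  | _ n ih =>
  intro A hA hd hB
  have hdrop : ∀ (B : Finset ι) (i : ι), i ∈ B →
      d i ∉ Submodule.span ℝ (d '' (B.erase i : Finset ι)) →
      Module.finrank ℝ (Submodule.span ℝ (d '' (B.erase i : Finset ι))) + 1 ≤
        Module.finrank ℝ (Submodule.span ℝ (d '' (B : Set ι))) := by
    intro B i hi hn
    refine Submodule.finrank_lt_finrank_of_lt (lt_of_le_of_ne ?_ ?_)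
    · exact Submodule.span_mono (Set.image_mono (by simp))
    · intro h
      exact hn (h ▸ Submodule.subset_span ⟨i, by simpa using hi, rfl⟩)
  by_cases h0 : ∑ i ∈ A, d i = 0
  · rcases A.eq_empty_or_nonempty with rfl | ⟨i, hi⟩
    · simp
    have hs : ∑ x ∈ A.erase i, d x ≠ 0 := by
      rw [← Finset.add_sum_erase _ _ hi] at h0
      intro h; rw [h, add_zero] at h0
      exact hd i hi h0
    obtain ⟨j, hj, hjn⟩ := hB _ (Finset.erase_subset _ _) hs
    have h1 := hdrop _ j hj hjn
    have hc1 := Finset.card_erase_add_one hi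
    have hc2 := Finset.card_erase_add_one hj
    have h2 := ih ((A.erase i).erase j).card (by omega) _ rfl
      (fun x hx => hd x (Finset.mem_of_mem_erase (Finset.mem_of_mem_erase hx)))
      (fun B hBs => hB B (hBs.trans ((Finset.erase_subset _ _).trans (Finset.erase_subset _ _))))
    have h3 : Module.finrank ℝ (Submodule.span ℝ (d '' (A.erase i : Finset ι))) ≤
        Module.finrank ℝ (Submodule.span ℝ (d '' (A : Set ι))) :=
      Submodule.finrank_mono (Submodule.span_mono (Set.image_mono (by simp)))
    omega
  · obtain ⟨j, hj, hjn⟩ := hB A subset_rfl h0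
    have h1 := hdrop _ j hj hjn
    have hc2 := Finset.card_erase_add_one hj
    have h2 := ih (A.erase j).card (by omega) _ rfl
      (fun x hx => hd x (Finset.mem_of_mem_erase hx))
      (fun B hBs => hB B (hBs.trans (Finset.erase_subset _ _)))
    omega

theorem recur_lemma {k : ℕ} (p : Fin k → ℝ) (η : ℝ) (hη : 0 < η) :
    ∃ (j : ℕ) (b : Fin k → ℤ), 0 < j ∧ ∀ i, |j * p i - b i| < η := by
  obtain ⟨Q, hQ⟩ := exists_nat_gt (1 / η)
  have hQ0 : 0 < (Q : ℝ) := lt_trans (by positivity) hQ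
  have hQn : 0 < Q := by exact_mod_cast hQ0
  let f : ℕ → (Fin k → Fin Q) := fun j i =>
    ⟨⌊(Q : ℝ) * Int.fract (j * p i)⌋₊, by
      rw [Nat.floor_lt (by positivity)]
      have := Int.fract_lt_one ((j : ℝ) * p i)
      nlinarith⟩
  obtain ⟨j1, j2, hne, heq⟩ := Finite.exists_ne_map_eq_of_infinite f
  wlog hlt : j1 < j2 generalizing j1 j2
  · exact this j2 j1 hne.symm heq.symm (lt_of_le_of_ne (not_lt.1 hlt) hne.symm)
  refine ⟨j2 - j1, fun i => ⌊(j2 : ℝ) * p i⌋ - ⌊(j1 : ℝ) * p i⌋, by omega, fun i => ?_⟩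
  have h := congrArg Fin.val (congrFun heq i)
  simp only [f] at h
  set x := Int.fract ((j1 : ℝ) * p i) with hx
  set y := Int.fract ((j2 : ℝ) * p i) with hy
  have e : (((j2 - j1 : ℕ) : ℝ)) * p i - ((⌊(j2 : ℝ) * p i⌋ - ⌊(j1 : ℝ) * p i⌋ : ℤ) : ℝ) = y - x := by
    rw [Nat.cast_sub hlt.le, hx, hy, Int.fract, Int.fract]; push_cast; ring
  rw [e]
  have hx0 : 0 ≤ (Q : ℝ) * x := mul_nonneg hQ0.le (Int.fract_nonneg _)
  have hy0 : 0 ≤ (Q : ℝ) * y := mul_nonneg hQ0.le (Int.fract_nonneg _)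
  have a1 := Nat.floor_le hx0
  have a2 := Nat.lt_floor_add_one ((Q : ℝ) * x)
  have a3 := Nat.floor_le hy0
  have a4 := Nat.lt_floor_add_one ((Q : ℝ) * y)
  rw [h] at a1 a2
  have hQη : 1 < Q * η := by rwa [div_lt_iff₀ hη] at hQ
  rw [abs_lt]
  constructor
  · by_contra hc; push Not at hc; nlinarith
  · by_contra hc; push Not at hc; nlinarith

theorem lower_lemma (k r : ℕ) : ∃ ε : ℝ, 0 < ε ∧ ∀ μ : Fin k → ℝ, (∀ i, 0 < μ i) → ∑ i, μ i = r →
    (∀ (j : ℤ) (b : Fin k → ℤ), (∀ i, 0 < j * μ i - b i) → ∑ i, (j * μ i - b i) = r →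
      ∀ i, j * μ i - b i = μ i) → ∀ i, ε ≤ μ i := by
  let G : Set (Fin k → ℝ) := {μ | (∀ i, 0 < μ i) ∧ ∑ i, μ i = r ∧
    (∀ (j : ℤ) (b : Fin k → ℤ), (∀ i, 0 < j * μ i - b i) → ∑ i, (j * μ i - b i) = r →
      ∀ i, j * μ i - b i = μ i)}
  have hK : IsCompact (Set.Icc (0 : Fin k → ℝ) (fun _ => (r : ℝ)) ∩ {μ | ∑ i, μ i = r}) :=
    isCompact_Icc.inter_right (isClosed_eq (by fun_prop) (by fun_prop))
  have key : ∃ ε : ℝ, 0 < ε ∧ ∀ μ ∈ G,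
      μ ∈ (Set.Icc (0 : Fin k → ℝ) (fun _ => (r : ℝ)) ∩ {μ | ∑ i, μ i = r}) → ∀ i, ε ≤ μ i := by
    refine hK.induction_on (p := fun T => ∃ ε : ℝ, 0 < ε ∧ ∀ μ ∈ G, μ ∈ T → ∀ i, ε ≤ μ i) ?_ ?_ ?_ ?_
    · exact ⟨1, one_pos, fun μ _ h => absurd h (by simp)⟩
    · rintro s t hst ⟨ε, h0, h⟩
      exact ⟨ε, h0, fun μ hμ hs => h μ hμ (hst hs)⟩
    · rintro s t ⟨ε, h0, h⟩ ⟨ε', h0', h'⟩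
      refine ⟨min ε ε', lt_min h0 h0', fun μ hμ hs i => ?_⟩
      rcases hs with hs | hs
      · exact (min_le_left _ _).trans (h μ hμ hs i)
      · exact (min_le_right _ _).trans (h' μ hμ hs i)
    · rintro p ⟨⟨hp0, -⟩, hps⟩
      have hps : ∑ i, p i = r := hps
      by_cases hpos : ∀ i, 0 < p i
      · obtain ⟨ε, hε, hle⟩ : ∃ ε : ℝ, 0 < ε ∧ ∀ i, ε < p i := by
          rcases isEmpty_or_nonempty (Fin k) with he | he
          · exact ⟨1, one_pos, fun i => he.elim i⟩
          · obtain ⟨i, hi⟩ := Finite.exists_min p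
            exact ⟨p i / 2, half_pos (hpos i), fun j => lt_of_lt_of_le (half_lt_self (hpos i)) (hi j)⟩
        refine ⟨{μ | ∀ i, ε < μ i}, mem_nhdsWithin_of_mem_nhds ?_, ε, hε, fun μ _ h i => (h i).le⟩
        refine IsOpen.mem_nhds ?_ hle
        have : {μ : Fin k → ℝ | ∀ i, ε < μ i} = ⋂ i, {μ | ε < μ i} := by ext; simp
        rw [this]
        exact isOpen_iInter_of_finite fun i => isOpen_lt continuous_const (continuous_apply i)
      · push Not at hpos
        obtain ⟨i0, hi0⟩ := hpos
        have hi0' : p i0 = 0 := le_antisymm hi0 (hp0 i0)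
        obtain ⟨η, hη, hle⟩ : ∃ η : ℝ, 0 < η ∧ ∀ i, 0 < p i → η ≤ p i := by
          by_cases hne : (Finset.univ.filter fun i => 0 < p i).Nonempty
          · obtain ⟨i, hi, hm⟩ := Finset.exists_min_image _ p hne
            simp only [Finset.mem_filter, Finset.mem_univ, true_and] at hi hm
            exact ⟨p i, hi, hm⟩
          · rw [Finset.not_nonempty_iff_eq_empty, Finset.filter_eq_empty_iff] at hne
            exact ⟨1, one_pos, fun i hi => absurd hi (hne (by simp))⟩
        obtain ⟨j, b, hj, hb⟩ := recur_lemma p (min η (1 / (k + 1))) (lt_min hη (by positivity))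
        let b' : Fin k → ℤ := fun i => if 0 < p i then b i else 0
        have hb' : ∀ i, |j * p i - b' i| < 1 / (k + 1) ∧ (0 < p i → |j * p i - b' i| < p i) := by
          intro i
          by_cases h : 0 < p i
          · simp only [b', if_pos h]
            exact ⟨(hb i).trans_le (min_le_right _ _), fun _ =>
              (hb i).trans_le ((min_le_left _ _).trans (hle i h))⟩
          · have : p i = 0 := le_antisymm (not_lt.1 h) (hp0 i)
            simp only [b', if_neg h, this]
            refine ⟨?_, fun h => absurd h (lt_irrefl _)⟩
            simp only [mul_zero, Int.cast_zero, sub_zero, abs_zero]; positivity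
        have hsum0 : (j : ℤ) * r - ∑ i, b' i = 0 := by
          have e : (((j : ℤ) * r - ∑ i, b' i : ℤ) : ℝ) = ∑ i, (j * p i - b' i) := by
            rw [Finset.sum_sub_distrib, ← Finset.mul_sum, hps]; push_cast; rfl
          have hlt : |(((j : ℤ) * r - ∑ i, b' i : ℤ) : ℝ)| < 1 := by
            rw [e]
            refine (Finset.abs_sum_le_sum_abs _ _).trans_lt ?_
            calc ∑ i, |j * p i - b' i| ≤ ∑ i : Fin k, (1 / (k + 1) : ℝ) :=
                  Finset.sum_le_sum fun i _ => (hb' i).1.le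
              _ = k / (k + 1) := by simp; ring
              _ < 1 := by rw [div_lt_one (by positivity)]; linarith
          exact Int.abs_lt_one_iff.1 (by exact_mod_cast hlt)
        have hsum0' : (j : ℝ) * r - ∑ i, (b' i : ℝ) = 0 := by exact_mod_cast hsum0
        refine ⟨{μ | ∀ i, 0 < p i → 0 < (j + 1 : ℝ) * μ i - b' i}, mem_nhdsWithin_of_mem_nhds ?_,
          1, one_pos, ?_⟩
        · refine IsOpen.mem_nhds ?_ ?_
          · have : {μ : Fin k → ℝ | ∀ i, 0 < p i → 0 < (j + 1 : ℝ) * μ i - b' i} =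
              ⋂ i, {μ | 0 < p i → 0 < (j + 1 : ℝ) * μ i - b' i} := by ext; simp
            rw [this]
            refine isOpen_iInter_of_finite fun i => ?_
            by_cases h : 0 < p i
            · simp only [h, true_imp_iff]
              exact isOpen_lt continuous_const (by fun_prop)
            · simp [h]
          · intro i hi
            have := (abs_lt.1 ((hb' i).2 hi)).1
            linarith
        · intro μ hμ hμO
          exfalso
          have hμ1 := hμ.1
          have hμ2 : ∑ i, μ i = r := hμ.2.1
          have := hμ.2.2 (j + 1) b' ?_ ?_ i0
          · simp only [b', hi0', lt_irrefl, if_false] at this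
            push_cast at this
            have h1 : (j : ℝ) * μ i0 = 0 := by linarith
            have h2 : 0 < (j : ℝ) * μ i0 := mul_pos (by exact_mod_cast hj) (hμ1 i0)
            linarith
          · intro i
            by_cases h : 0 < p i
            · have := hμO i h
              push_cast; exact this
            · simp only [b', if_neg h]
              have := hμ1 i
              push_cast
              have : 0 < (j + 1 : ℝ) * μ i := by positivity
              linarith
          · rw [Finset.sum_sub_distrib, ← Finset.mul_sum, hμ2]
            push_cast
            linarith
  obtain ⟨ε, h0, h⟩ := key
  refine ⟨ε, h0, fun μ h1 h2 h3 => h μ ⟨h1, h2, h3⟩ ⟨⟨fun i => (h1 i).le, fun i => ?_⟩, h2⟩⟩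
  rw [← h2]
  exact Finset.single_le_sum (fun i _ => (h1 i).le) (Finset.mem_univ i)
theorem GData.lower {U V : Type} [Fintype U] [Fintype V] {a : U → V → ℕ} {l : V → ℝ}
    {m : U → ℝ} {r n : ℕ} (D : GData a l m r)
    (hrank : (Matrix.of fun u v => (a u v : ℝ)).rank ≤ n) (u0 : U) (ε : ℕ → ℝ)
    (hε : ∀ k ≤ n, 0 < ε k ∧ ∀ μ : Fin k → ℝ, (∀ i, 0 < μ i) → ∑ i, μ i = r →
    (∀ (j : ℤ) (b : Fin k → ℤ), (∀ i, 0 < j * μ i - b i) → ∑ i, (j * μ i - b i) = r →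
      ∀ i, j * μ i - b i = μ i) → ∀ i, ε k ≤ μ i) (v : V) :
    ∃ k ≤ n, ε k * (a u0 v : ℝ) ≤ 1 := by
  classical
  obtain ⟨m', h0, hu0, h1, hli⟩ := D.indep u0 _ m (fun u => (D.hm u).le) (D.hm u0) D.h2 rfl
  set S := Finset.univ.filter fun u => 0 < m' u with hSdef
  have hS : ({u | 0 < m' u} : Set U) = (S : Set U) := by
    ext; simp [hSdef]
  rw [hS] at hli
  have hmem : ∀ u, u ∈ S ↔ 0 < m' u := by simp [hSdef]
  have hz : ∀ u, u ∉ S → m' u = 0 := fun u hu => le_antisymm (not_lt.1 (fun h => hu ((hmem u).2 h))) (h0 u)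
  have hk : S.card ≤ n := GData.card_le hrank S hli
  have hsum : ∑ u, m' u = r := by rw [D.tot m']; simp [h1, D.hr]
  have hsumS : ∀ g : U → ℝ, (∀ u, u ∉ S → g u = 0) → ∑ u, g u = ∑ i : Fin S.card, g (S.equivFin.symm i) := by
    intro g hg
    rw [← Finset.sum_subset (Finset.subset_univ S) (fun u _ hu => hg u hu), ← Finset.sum_coe_sort]
    exact (Equiv.sum_comp S.equivFin.symm (fun x : S => g x)).symm
  refine ⟨S.card, hk, ?_⟩
  have hlow := (hε _ hk).2 (fun i => m' (S.equivFin.symm i)) (fun i => (hmem _).1 (S.equivFin.symm i).2)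
    (by rw [← hsumS m' hz, hsum]) ?_ (S.equivFin ⟨u0, (hmem u0).2 hu0⟩)
  · simp only [Equiv.symm_apply_apply] at hlow
    calc ε S.card * (a u0 v : ℝ) ≤ m' u0 * (a u0 v : ℝ) := by gcongr
      _ ≤ ∑ u, m' u * (a u v : ℝ) :=
        Finset.single_le_sum (f := fun u => m' u * (a u v : ℝ))
          (fun u _ => mul_nonneg (h0 u) (Nat.cast_nonneg _)) (Finset.mem_univ u0)
      _ = 1 := h1 v
  · intro j b hpos hsumb
    let b2 : U → ℤ := fun u => if h : u ∈ S then b (S.equivFin ⟨u, h⟩) else 0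
    have hb2 : ∀ i, b2 (S.equivFin.symm i) = b i := by
      intro i
      have : ((S.equivFin.symm i : S) : U) ∈ S := (S.equivFin.symm i).2
      simp only [b2, dif_pos this, Subtype.coe_eta, Equiv.apply_symm_apply]
    have hy0 : ∀ u, u ∉ S → (j : ℝ) * m' u - b2 u = 0 := by
      intro u hu
      simp [b2, hu, hz u hu]
    have hyp : ∀ u, u ∈ S → 0 < (j : ℝ) * m' u - b2 u := by
      intro u hu
      have := hpos (S.equivFin ⟨u, hu⟩)
      simpa [b2, hu] using this
    have hk2 := (D.key m' h0 h1 (fun u => (j : ℝ) * m' u - b2 u) (fun u => by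
      by_cases hu : u ∈ S
      · exact (hyp u hu).le
      · exact (hy0 u hu).ge) (fun u hu => hyp u ((hmem u).2 hu)) j b2 (fun _ => rfl)).2 (by
        rw [hsumS _ hy0, ← hsumb]
        simp only [hb2])
    rw [linearIndepOn_finset_iff] at hli
    have := hli (fun u => ((j : ℝ) * m' u - b2 u) - m' u) (by
      funext v
      simp only [Finset.sum_apply, Pi.smul_apply, smul_eq_mul, Pi.zero_apply]
      rw [Finset.sum_subset (Finset.subset_univ S) (fun u _ hu => by rw [hy0 u hu, hz u hu]; simp)]
      simp only [sub_mul _ (m' _), Finset.sum_sub_distrib, hk2 v, h1 v]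
      simp)
    intro i
    have := this _ (S.equivFin.symm i).2
    rw [hb2] at this
    linarith

theorem GData.bound (n R : ℕ) : ∃ B : ℕ, ∀ (U V : Type) [Fintype U] [Fintype V] (a : U → V → ℕ)
    (l : V → ℝ) (m : U → ℝ) (r : ℕ), GData a l m r →
    (Matrix.of fun u v => (a u v : ℝ)).rank ≤ n → r ≤ R → ∀ u v, a u v ≤ B := by
  choose ε hε hε2 using lower_lemma
  refine ⟨⌈∑ k ∈ Finset.range (n + 1), ∑ r ∈ Finset.range (R + 1), 1 / ε k r⌉₊, ?_⟩
  intro U V _ _ a l m r D hrank hr u v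
  obtain ⟨k, hk, h⟩ := D.lower hrank u (fun k => ε k r) (fun k _ => ⟨hε k r, hε2 k r⟩) v
  have h1 : (a u v : ℝ) ≤ 1 / ε k r := by
    rw [le_div_iff₀ (hε k r), mul_comm]; exact h
  have h2 : 1 / ε k r ≤ ∑ r ∈ Finset.range (R + 1), 1 / ε k r :=
    Finset.single_le_sum (f := fun r => 1 / ε k r)
      (fun r _ => (one_div_pos.2 (hε k r)).le) (by simp; omega)
  have h3 : ∑ r ∈ Finset.range (R + 1), 1 / ε k r ≤
      ∑ k ∈ Finset.range (n + 1), ∑ r ∈ Finset.range (R + 1), 1 / ε k r :=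
    Finset.single_le_sum (f := fun k => ∑ r ∈ Finset.range (R + 1), 1 / ε k r)
      (fun k _ => Finset.sum_nonneg fun r _ => (one_div_pos.2 (hε k r)).le) (by simp; omega)
  have := (h1.trans (h2.trans h3)).trans (Nat.le_ceil _)
  exact_mod_cast this

theorem GData.dimbound {U V : Type} [Fintype U] [Fintype V] {a : U → V → ℕ} {l : V → ℝ}
    {m : U → ℝ} {r s : ℕ} (D : GData a l m r)
    (hrank : (Matrix.of fun u v => (a u v : ℝ)).rank ≤ r + s)
    (hdist : ∀ v v', (∀ u, a u v = a u v') → v = v')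
    (hnp : ∀ u w, a u w = 1 → (∀ v, a u v ≤ 1) → ∃ v, v ≠ w ∧ a u v ≠ 0) : r ≤ 11 * s := by
  classical
  rcases isEmpty_or_nonempty V with hV | ⟨⟨v0⟩⟩
  · have := D.hr
    simp at this
    have : r = 0 := by exact_mod_cast this.symm
    omega
  have : Nonempty V := ⟨v0⟩
  have hU : Nonempty U := by
    by_contra h
    rw [not_nonempty_iff] at h
    have := D.h2 v0
    simp at this
  obtain ⟨u0⟩ := hU
  obtain ⟨m', hm0, hm1, hm2, -, hm4⟩ := D.struct u0 hrank
  have hrank' : (Matrix.of fun v u => (a u v : ℝ)).rank ≤ r + s := by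
    rw [← Matrix.rank_transpose] at hrank
    exact hrank
  obtain ⟨l', hl0, hl1, hl2, hl3, -⟩ := D.symm.struct v0 hrank'
  set U1 := Finset.univ.filter fun u => m' u = 1 with hU1
  set F := Finset.univ.filter fun v => 0 < l' v ∧ l' v < 1 with hF
  have hU1m : ∀ u, u ∈ U1 ↔ m' u = 1 := by simp [hU1]
  -- for `u ∈ U1`, disjointness
  have hle1 : ∀ u ∈ U1, ∀ v, a u v ≤ 1 := by
    intro u hu v
    have h := Finset.single_le_sum (f := fun u => m' u * (a u v : ℝ))
          (fun u _ => mul_nonneg (hm0 u) (Nat.cast_nonneg _)) (Finset.mem_univ u)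
    simp only [hm2 v, (hU1m u).1 hu, one_mul] at h
    exact_mod_cast h
  have hdisj : ∀ u ∈ U1, ∀ u' ∈ U1, ∀ v, a u v ≠ 0 → a u' v ≠ 0 → u = u' := by
    intro u hu u' hu' v h h'
    by_contra hne
    have h := Finset.sum_le_sum_of_subset_of_nonneg (f := fun u => m' u * (a u v : ℝ))
      (Finset.subset_univ {u, u'}) (fun u _ _ => mul_nonneg (hm0 u) (Nat.cast_nonneg _))
    rw [Finset.sum_pair hne, hm2 v, (hU1m u).1 hu, (hU1m u').1 hu', one_mul, one_mul] at h
    have : a u v + a u' v ≤ 1 := by exact_mod_cast h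
    omega
  set A := U1.filter fun u => ∃ w, l' w = 1 ∧ a u w = 1 with hA
  have hAU : ∀ u ∈ A, u ∈ U1 := fun u hu => (Finset.mem_filter.1 hu).1
  have hcardA : U1.card ≤ A.card + 2 * s := by
    have h1 : U1.card = A.card + (U1.filter fun u => ¬ ∃ w, l' w = 1 ∧ a u w = 1).card :=
      (Finset.card_filter_add_card_filter_not _).symm
    have h2 : (U1.filter fun u => ¬ ∃ w, l' w = 1 ∧ a u w = 1).card ≤ F.card := by
      have hex : ∀ u ∈ U1.filter fun u => ¬ ∃ w, l' w = 1 ∧ a u w = 1, ∃ v ∈ F, a u v ≠ 0 := by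
        intro u hu
        rw [Finset.mem_filter] at hu
        by_contra hne
        push Not at hne
        have : ∑ v, l' v * (a u v : ℝ) = 0 := by
          refine Finset.sum_eq_zero fun v _ => ?_
          by_cases hv : v ∈ F
          · rw [hne v hv]; simp
          · rcases (hl0 v).eq_or_lt with h | h
            · rw [← h]; simp
            · have hv1 : l' v = 1 := by
                by_contra h'
                exact hv (by simp [hF, h, lt_of_le_of_ne (hl1 v) h'])
              have := hle1 u hu.1 v
              have h2 : a u v ≠ 1 := fun h => hu.2 ⟨v, hv1, h⟩
              have : a u v = 0 := by omega
              rw [this]; simp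
        rw [hl2 u] at this
        exact one_ne_zero this
      choose! f hf1 hf2 using hex
      refine Finset.card_le_card_of_injOn f (fun u hu => hf1 u hu) ?_
      intro u hu u' hu' h
      have hu := Finset.mem_coe.1 hu
      have hu' := Finset.mem_coe.1 hu'
      exact hdisj u (Finset.mem_filter.1 hu).1 u' (Finset.mem_filter.1 hu').1 (f u) (hf2 u hu)
        (h ▸ hf2 u' hu')
    omega
  have hw : ∀ u ∈ A, ∃ w, l' w = 1 ∧ a u w = 1 := fun u hu => (Finset.mem_filter.1 hu).2
  choose! w hw1 hw2 using hw
  have hv : ∀ u ∈ A, ∃ v, v ≠ w u ∧ a u v ≠ 0 := fun u hu => hnp u (w u) (hw2 u hu) (hle1 u (hAU u hu))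
  choose! v hv1 hv2 using hv
  have hv3 : ∀ u ∈ A, a u (v u) = 1 := fun u hu => by
    have := hle1 u (hAU u hu) (v u)
    have := hv2 u hu
    omega
  have hwinj : ∀ u ∈ A, ∀ u' ∈ A, w u = w u' → u = u' := by
    intro u hu u' hu' h
    refine hdisj u (hAU u hu) u' (hAU u' hu') (w u) (by rw [hw2 u hu]; simp) ?_
    rw [h, hw2 u' hu']; simp
  let d : U → (U → ℝ) := fun u u' => (a u' (v u) : ℝ) - a u' (w u)
  have hpeel := peel_lemma d A.card A rfl ?_ ?_
  · -- dimension count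
    let K := Submodule.span ℝ (Set.range (Matrix.of fun u v => (a u v : ℝ)).col)
    have hK : Module.finrank ℝ K ≤ r + s := by
      rw [Matrix.rank_eq_finrank_span_cols] at hrank
      exact hrank
    have hcolK : ∀ x : V, (fun u => (a u x : ℝ)) ∈ K := fun x => Submodule.subset_span ⟨x, rfl⟩
    let π : K →ₗ[ℝ] (A → ℝ) :=
      (LinearMap.funLeft ℝ ℝ (fun x : A => (x : U))).comp K.subtype
    have hπ : Function.Surjective π := by
      rw [← LinearMap.range_eq_top, eq_top_iff, ← (Pi.basisFun ℝ A).span_eq, Submodule.span_le]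
      rintro _ ⟨u, rfl⟩
      refine ⟨⟨_, hcolK (w u)⟩, ?_⟩
      funext u'
      simp only [π, LinearMap.comp_apply, LinearMap.funLeft_apply, Submodule.subtype_apply,
        Pi.basisFun_apply]
      by_cases h : u' = u
      · subst h; simp [hw2 u'.1 u'.2]
      · rw [Pi.single_eq_of_ne h]
        by_contra hne
        have hne' : a u'.1 (w u.1) ≠ 0 := by exact_mod_cast hne
        exact h (Subtype.ext (hdisj u'.1 (hAU _ u'.2) u.1 (hAU _ u.2) (w u.1) hne'
          (by rw [hw2 _ u.2]; simp)))
    have hrn := LinearMap.finrank_range_add_finrank_ker π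
    rw [LinearMap.range_eq_top.2 hπ, finrank_top, Module.finrank_fintype_fun_eq_card,
      Fintype.card_coe] at hrn
    have hle : Module.finrank ℝ (Submodule.span ℝ (d '' (A : Set U))) ≤
        Module.finrank ℝ (LinearMap.ker π) := by
      have : Submodule.span ℝ (d '' (A : Set U)) ≤ (LinearMap.ker π).map K.subtype := by
        rw [Submodule.span_le]
        rintro _ ⟨u, hu, rfl⟩
        have hu : u ∈ A := hu
        refine ⟨⟨d u, K.sub_mem (hcolK (v u)) (hcolK (w u))⟩, ?_, rfl⟩
        simp only [SetLike.mem_coe, LinearMap.mem_ker]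
        funext u'
        simp only [π, LinearMap.comp_apply, LinearMap.funLeft_apply, Submodule.subtype_apply, d,
          Pi.zero_apply]
        by_cases h : u'.1 = u
        · rw [h, hv3 u hu, hw2 u hu]; simp
        · have h1 : a u'.1 (v u) = 0 := by
            by_contra hne
            exact h (hdisj u'.1 (hAU _ u'.2) u (hAU _ hu) (v u) hne (hv2 u hu))
          have h2 : a u'.1 (w u) = 0 := by
            by_contra hne
            exact h (hdisj u'.1 (hAU _ u'.2) u (hAU _ hu) (w u) hne (by rw [hw2 u hu]; simp))
          rw [h1, h2]; simp
      refine (Submodule.finrank_mono this).trans ?_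
      exact Submodule.finrank_map_le _ _
    omega
  · intro u hu h
    refine hv1 u hu (hdist _ _ fun u' => ?_)
    have := congrFun h u'
    simp only [d, Pi.zero_apply] at this
    exact_mod_cast sub_eq_zero.1 this
  · intro B hBA hBne
    -- find `u*`
    have hsum1 : ∀ u', ∑ u ∈ B, a u' (w u) ≤ 1 := by
      intro u'
      have h1 : ∑ u ∈ B, (a u' (w u) : ℝ) = ∑ x ∈ B.image w, l' x * (a u' x : ℝ) := by
        rw [Finset.sum_image (fun x hx y hy h => hwinj x (hBA hx) y (hBA hy) h)]
        exact Finset.sum_congr rfl fun u hu => by rw [hw1 u (hBA hu), one_mul]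
      have h2 : ∑ u ∈ B, (a u' (w u) : ℝ) ≤ 1 := by
        rw [h1, ← hl2 u']
        exact Finset.sum_le_sum_of_subset_of_nonneg (Finset.subset_univ _)
          (fun v _ _ => mul_nonneg (hl0 v) (Nat.cast_nonneg _))
      exact_mod_cast h2
    have hstar : ∃ u', 1 + ∑ u ∈ B, a u' (v u) ≤ ∑ u ∈ B, a u' (w u) := by
      by_contra hne
      push Not at hne
      apply hBne
      have hnn : ∀ u', 0 ≤ (∑ u ∈ B, d u) u' := by
        intro u'
        have h : ∑ u ∈ B, a u' (w u) ≤ ∑ u ∈ B, a u' (v u) := by have := hne u'; omega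
        have h : ∑ u ∈ B, (a u' (w u) : ℝ) ≤ ∑ u ∈ B, (a u' (v u) : ℝ) := by exact_mod_cast h
        simp only [Finset.sum_apply, d, Finset.sum_sub_distrib]
        linarith
      have hz : ∑ u', m u' * (∑ u ∈ B, d u) u' = 0 := by
        simp only [Finset.sum_apply, Finset.mul_sum]
        rw [Finset.sum_comm]
        refine Finset.sum_eq_zero fun u _ => ?_
        simp only [d, mul_sub, Finset.sum_sub_distrib, D.h2]
        simp
      funext u'
      have := (Finset.sum_eq_zero_iff_of_nonneg
        (fun u' _ => mul_nonneg (D.hm u').le (hnn u'))).1 hz u' (Finset.mem_univ _)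
      rcases mul_eq_zero.1 this with h | h
      · exact absurd h (D.hm u').ne'
      · exact h
    obtain ⟨u', hu'⟩ := hstar
    have hs1 := hsum1 u'
    have hv0 : ∑ u ∈ B, a u' (v u) = 0 := by omega
    have hw0 : ∑ u ∈ B, a u' (w u) = 1 := by omega
    rw [Finset.sum_eq_zero_iff] at hv0
    have : ∃ u ∈ B, a u' (w u) ≠ 0 := by
      by_contra hne
      push Not at hne
      rw [Finset.sum_eq_zero hne] at hw0
      omega
    obtain ⟨u1, hu1, hu1n⟩ := this
    refine ⟨u1, hu1, fun hmem => ?_⟩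
    have hother : ∀ u ∈ B.erase u1, a u' (w u) = 0 := by
      rw [← Finset.add_sum_erase _ _ hu1] at hw0
      have : ∑ u ∈ B.erase u1, a u' (w u) = 0 := by omega
      exact Finset.sum_eq_zero_iff.1 this
    have hle : Submodule.span ℝ (d '' (B.erase u1 : Finset U)) ≤
        LinearMap.ker (LinearMap.proj (R := ℝ) (φ := fun _ : U => ℝ) u') := by
      rw [Submodule.span_le]
      rintro _ ⟨u, hu, rfl⟩
      have hu : u ∈ B.erase u1 := hu
      simp only [SetLike.mem_coe, LinearMap.mem_ker, LinearMap.proj_apply, d]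
      rw [hother u hu, hv0 u (Finset.mem_of_mem_erase hu)]; simp
    have := hle hmem
    simp only [LinearMap.mem_ker, LinearMap.proj_apply, d] at this
    rw [hv0 u1 hu1] at this
    have : a u' (w u1) = 0 := by simpa using this
    exact hu1n this
def IsMinSupp {V : Type} (K : Submodule ℝ (V → ℝ)) (k : V → ℝ) : Prop :=
  k ∈ K ∧ (∀ v, 0 ≤ k v) ∧ k ≠ 0 ∧
    ∀ k' ∈ K, (∀ v, 0 ≤ k' v) → k' ≠ 0 → (∀ v, k v = 0 → k' v = 0) → ∀ v, k' v = 0 → k v = 0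

theorem IsMinSupp.smul {V : Type} {K : Submodule ℝ (V → ℝ)} {k : V → ℝ} (h : IsMinSupp K k)
    {t : ℝ} (ht : 0 < t) : IsMinSupp K (t • k) := by
  obtain ⟨h1, h2, h3, h4⟩ := h
  refine ⟨K.smul_mem _ h1, fun v => mul_nonneg ht.le (h2 v), smul_ne_zero ht.ne' h3, ?_⟩
  intro k' hk' hk0 hkn hz v hv
  simp only [Pi.smul_apply, smul_eq_mul, mul_eq_zero, ht.ne', false_or] at hz ⊢
  exact h4 k' hk' hk0 hkn hz v hv

theorem exists_minSupp {V : Type} [Fintype V] (K : Submodule ℝ (V → ℝ)) (k : V → ℝ) (hk : k ∈ K)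
    (hk0 : ∀ v, 0 ≤ k v) (hkn : k ≠ 0) : ∃ u, IsMinSupp K u ∧ ∀ v, k v = 0 → u v = 0 := by
  classical
  have hex : ∃ n : ℕ, ∃ u ∈ K, (∀ v, 0 ≤ u v) ∧ u ≠ 0 ∧ (∀ v, k v = 0 → u v = 0) ∧
      {v | u v ≠ 0}.ncard = n := ⟨_, k, hk, hk0, hkn, fun _ h => h, rfl⟩
  obtain ⟨u, hu, hu0, hun, huz, hcard⟩ := Nat.find_spec hex
  refine ⟨u, ⟨hu, hu0, hun, ?_⟩, huz⟩
  intro k' hk' hk0' hkn' hz v hv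
  have hle := Nat.find_min' hex ⟨k', hk', hk0', hkn', fun v hv => hz v (huz v hv), rfl⟩
  rw [← hcard] at hle
  have hsub : {v | k' v ≠ 0} ⊆ {v | u v ≠ 0} := fun v hv h => hv (hz v h)
  have heq := Set.eq_of_subset_of_ncard_le hsub hle (Set.toFinite _)
  by_contra hne
  have : v ∈ {v | u v ≠ 0} := hne
  rw [← heq] at this
  exact this hv

/-- subtract maximal multiple -/
theorem exists_sub_mult {V : Type} [Fintype V] (k u : V → ℝ) (hu0 : ∀ v, 0 ≤ u v) (hun : u ≠ 0)
    (hz : ∀ v, u v = 0 → 0 ≤ k v) : ∃ t : ℝ, (∀ v, 0 ≤ k v - t * u v) ∧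
      ∃ v, u v ≠ 0 ∧ k v = t * u v := by
  classical
  have hne : (Finset.univ.filter fun v => u v ≠ 0).Nonempty := by
    by_contra h
    rw [Finset.not_nonempty_iff_eq_empty, Finset.filter_eq_empty_iff] at h
    exact hun (funext fun v => by simpa using h (Finset.mem_univ v))
  obtain ⟨v0, h0, hmin⟩ := Finset.exists_min_image _ (fun v => k v / u v) hne
  simp only [Finset.mem_filter, Finset.mem_univ, true_and] at h0 hmin
  refine ⟨k v0 / u v0, fun v => ?_, v0, h0, by field_simp⟩
  by_cases hv : u v = 0
  · rw [hv]; simpa using hz v hv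
  · have := hmin v hv
    rw [le_div_iff₀ (lt_of_le_of_ne (hu0 v) (Ne.symm hv))] at this
    linarith

theorem IsMinSupp.unique {V : Type} [Fintype V] {K : Submodule ℝ (V → ℝ)} {k : V → ℝ}
    (h : IsMinSupp K k) (k' : V → ℝ) (hk' : k' ∈ K) (hz : ∀ v, k v = 0 → k' v = 0) :
    ∃ t : ℝ, k' = t • k := by
  obtain ⟨h1, h2, h3, h4⟩ := h
  obtain ⟨t, ht, v, hv, hvt⟩ := exists_sub_mult k' k h2 h3 (fun v hv => (hz v hv).ge)
  refine ⟨t, ?_⟩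
  by_contra hne
  refine hv (h4 (k' - t • k) (K.sub_mem hk' (K.smul_mem _ h1)) ht (sub_ne_zero.2 hne) ?_ v ?_)
  · intro v hv; simp [hz v hv, hv]
  · simp [hvt]

theorem minSupp_decomp {V : Type} [Fintype V] (K : Submodule ℝ (V → ℝ)) : ∀ (n : ℕ) (k : V → ℝ),
    k ∈ K → (∀ v, 0 ≤ k v) → {v | k v ≠ 0}.ncard = n →
    ∃ l : List (V → ℝ), (∀ x ∈ l, IsMinSupp K x) ∧ l.sum = k := by
  intro n
  induction n using Nat.strong_induction_on with
  | _ n ih =>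
  intro k hk hk0 hn
  by_cases hkn : k = 0
  · exact ⟨[], by simp, by simp [hkn]⟩
  obtain ⟨u, hu, huz⟩ := exists_minSupp K k hk hk0 hkn
  obtain ⟨t, ht, v, hv, hvt⟩ := exists_sub_mult k u hu.2.1 hu.2.2.1 (fun v _ => hk0 v)
  have htpos : 0 < t := by
    have h1 : k v ≠ 0 := fun h => hv (huz v h)
    have h2 : 0 < k v := lt_of_le_of_ne (hk0 v) (Ne.symm h1)
    rw [hvt] at h2
    exact pos_of_mul_pos_left h2 (hu.2.1 v)
  obtain ⟨l, hl, hls⟩ := ih ({x | (k - t • u) x ≠ 0}.ncard) (by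
    rw [← hn]
    refine Set.ncard_lt_ncard ⟨?_, ?_⟩ (Set.toFinite _)
    · intro x hx h
      apply hx
      simp [h, huz x h]
    · intro h
      have : v ∈ {v | k v ≠ 0} := fun h => hv (huz v h)
      have := h this
      apply this
      simp [hvt]) (k - t • u) (K.sub_mem hk (K.smul_mem _ hu.1)) ht rfl
  refine ⟨(t • u) :: l, ?_, by simp [hls]⟩
  intro x hx
  rcases List.mem_cons.1 hx with rfl | hx
  · exact hu.smul htpos
  · exact hl x hx

theorem minSupp_family {V : Type} [Fintype V] (K : Submodule ℝ (V → ℝ)) (h1 : (fun _ => 1) ∈ K) :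
    ∃ (n : ℕ) (k : Fin n → (V → ℝ)), (∀ i, IsMinSupp K (k i)) ∧ (∑ i, k i = fun _ => 1) ∧
      K ≤ Submodule.span ℝ (Set.range k) := by
  classical
  have hspan : K ≤ Submodule.span ℝ {k | IsMinSupp K k} := by
    have hpos : ∀ g ∈ K, (∀ v, 0 ≤ g v) → g ∈ Submodule.span ℝ {k | IsMinSupp K k} := by
      intro g hg hg0
      obtain ⟨l, hl, rfl⟩ := minSupp_decomp K _ g hg hg0 rfl
      exact list_sum_mem fun x hx => Submodule.subset_span (hl x hx)
    intro g hg
    have e : g = (g + (∑ v, |g v|) • (fun _ => (1 : ℝ))) - (∑ v, |g v|) • (fun _ => (1 : ℝ)) := by simp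
    rw [e]
    refine Submodule.sub_mem _ (hpos _ (K.add_mem hg (K.smul_mem _ h1)) ?_)
      (hpos _ (K.smul_mem _ h1) ?_)
    · intro v
      have := Finset.single_le_sum (f := fun v => |g v|) (fun v _ => abs_nonneg _) (Finset.mem_univ v)
      have h2 := neg_abs_le (g v)
      simp only [Pi.add_apply, Pi.smul_apply, smul_eq_mul, mul_one]
      linarith
    · intro v
      simp only [Pi.smul_apply, smul_eq_mul, mul_one]
      exact Finset.sum_nonneg fun v _ => abs_nonneg _
  obtain ⟨b, hb, hbs, hbl⟩ := exists_linearIndependent ℝ {k | IsMinSupp K k}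
  have hfin : b.Finite := hbl.setFinite
  set T := hfin.toFinset with hT
  set w := ∑ k ∈ T, k with hw
  have hTm : ∀ k ∈ T, IsMinSupp K k := fun k hk => hb (by simpa [hT] using hk)
  have hw0 : ∀ v, 0 ≤ w v := by
    intro v
    rw [hw, Finset.sum_apply]
    exact Finset.sum_nonneg fun k hk => (hTm k hk).2.1 v
  have hwK : w ∈ K := Submodule.sum_mem _ fun k hk => (hTm k hk).1
  set c := 1 + ∑ v, w v with hc
  have hc0 : 0 < c := by have := Finset.sum_nonneg fun v (_ : v ∈ Finset.univ) => hw0 v; linarith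
  obtain ⟨l, hl, hls⟩ := minSupp_decomp K _ ((fun _ => 1) - c⁻¹ • w)
    (K.sub_mem h1 (K.smul_mem _ hwK)) (by
      intro v
      simp only [Pi.sub_apply, Pi.smul_apply, smul_eq_mul]
      have := Finset.single_le_sum (f := fun v => w v) (fun v _ => hw0 v) (Finset.mem_univ v)
      have : w v ≤ c := by linarith
      have : c⁻¹ * w v ≤ 1 := by rw [inv_mul_le_iff₀ hc0]; linarith
      linarith) rfl
  set L := T.toList.map (fun k => c⁻¹ • k) ++ l with hL
  have hLm : ∀ x ∈ L, IsMinSupp K x := by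
    intro x hx
    rcases List.mem_append.1 hx with hx | hx
    · obtain ⟨y, hy, rfl⟩ := List.mem_map.1 hx
      exact (hTm y (Finset.mem_toList.1 hy)).smul (inv_pos.2 hc0)
    · exact hl x hx
  have hLs : L.sum = fun _ => 1 := by
    rw [hL, List.sum_append, hls, Finset.sum_map_toList, ← Finset.smul_sum]
    simp [hw]
  refine ⟨L.length, L.get, fun i => hLm _ (List.get_mem _ _), ?_, ?_⟩
  · rw [← hLs, ← List.sum_ofFn, List.ofFn_get]
  · refine hspan.trans ?_
    rw [← hbs, Submodule.span_le]
    intro k hk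
    have hkL : c⁻¹ • k ∈ L := by
      rw [hL]
      exact List.mem_append_left _ (List.mem_map.2 ⟨k, by simp [hT, hk], rfl⟩)
    obtain ⟨i, hi⟩ := List.get_of_mem hkL
    have : k = c • L.get i := by rw [hi, smul_inv_smul₀ hc0.ne']
    rw [this]
    exact Submodule.smul_mem _ _ (Submodule.subset_span ⟨i, rfl⟩)
theorem hull_rep {E : Type} [AddCommGroup E] [Module ℝ E] {ι : Type} [Fintype ι] (q : ι → E) (x : E)
    (hx : x ∈ convexHull ℝ (Set.range q)) :
    ∃ w : ι → ℝ, (∀ i, 0 ≤ w i) ∧ ∑ i, w i = 1 ∧ ∑ i, w i • q i = x := by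
  classical
  rw [mem_convexHull_iff_exists_fintype] at hx
  obtain ⟨κ, _, w, z, hw0, hw1, hz, hx⟩ := hx
  choose j hj using hz
  refine ⟨fun i => ∑ k ∈ Finset.univ.filter (fun k => j k = i), w k, fun i =>
    Finset.sum_nonneg fun k _ => hw0 k, ?_, ?_⟩
  · rw [← hw1]; exact Finset.sum_fiberwise _ _ _
  · rw [← hx, ← Finset.sum_fiberwise Finset.univ j]
    refine Finset.sum_congr rfl fun i _ => ?_
    rw [Finset.sum_smul]
    refine Finset.sum_congr rfl fun k hk => ?_
    rw [← hj k, (Finset.mem_filter.1 hk).2]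

theorem affine_sum {E F : Type} [AddCommGroup E] [Module ℝ E] [AddCommGroup F] [Module ℝ F]
    {ι : Type} [Fintype ι] (φ : E →ᵃ[ℝ] F) (w : ι → ℝ) (q : ι → E) (hw : ∑ i, w i = 1) :
    φ (∑ i, w i • q i) = ∑ i, w i • φ (q i) := by
  have h : ∀ y, φ y = φ.linear y + φ 0 := fun y => congrFun φ.decomp y
  rw [h, map_sum]
  simp_rw [h (q _), smul_add, Finset.sum_add_distrib, ← Finset.sum_smul, hw, one_smul, map_smul]

theorem strict_rep {d : ℕ} {ι : Type} [Fintype ι] [Nonempty ι] (q : ι → Fin d → ℝ) (x : Fin d → ℝ)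
    (hx : x ∈ intrinsicInterior ℝ (convexHull ℝ (Set.range q))) :
    ∃ w : ι → ℝ, (∀ i, 0 < w i) ∧ ∑ i, w i = 1 ∧ ∑ i, w i • q i = x := by
  classical
  rw [mem_intrinsicInterior] at hx
  obtain ⟨y, hy, rfl⟩ := hx
  set n : ℝ := (Fintype.card ι : ℝ) with hn
  have hn0 : 0 < n := by rw [hn]; exact_mod_cast Fintype.card_pos
  set c : Fin d → ℝ := ∑ i, (1 / n) • q i with hc
  have hcQ : c ∈ convexHull ℝ (Set.range q) :=
    mem_convexHull_of_exists_fintype (fun _ => 1 / n) q (fun _ => by positivity)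
      (by rw [Finset.sum_const, Finset.card_univ, nsmul_eq_mul, ← hn]; field_simp)
      (fun i => ⟨i, rfl⟩) rfl
  have hcA : c ∈ affineSpan ℝ (convexHull ℝ (Set.range q)) := subset_affineSpan _ _ hcQ
  let f : ℝ → affineSpan ℝ (convexHull ℝ (Set.range q)) := fun t =>
    ⟨AffineMap.lineMap (y : Fin d → ℝ) c t, AffineMap.lineMap_mem t y.2 hcA⟩
  have hf : Continuous f := by
    refine Continuous.subtype_mk ?_ _
    exact AffineMap.lineMap_continuous
  have hf0 : f 0 = y := by ext1; simp [f]
  have hev : ∀ᶠ t in nhds (0:ℝ), f t ∈ interior (Subtype.val ⁻¹' (convexHull ℝ (Set.range q))) := by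
    apply hf.continuousAt.eventually
    rw [hf0]
    exact isOpen_interior.mem_nhds hy
  obtain ⟨ε, hε, hball⟩ := Metric.eventually_nhds_iff.1 hev
  have h1 := hball (y := -(ε / 2)) (by
    rw [Real.dist_eq, sub_zero, abs_neg, abs_of_pos (by positivity)]; linarith)
  have h2 := interior_subset h1
  obtain ⟨w, hw0, hw1, hw⟩ := hull_rep q _ h2
  set e := ε / 2 with he
  have he0 : 0 < e := by positivity
  refine ⟨fun i => (w i + e / n) / (1 + e), fun i => ?_, ?_, ?_⟩
  · have := hw0 i; positivity
  · rw [← Finset.sum_div, Finset.sum_add_distrib, hw1, Finset.sum_const, Finset.card_univ,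
      nsmul_eq_mul, ← hn]
    field_simp
  · have : (1 + e) • (y : Fin d → ℝ) = ∑ i, w i • q i + e • c := by
      rw [hw]
      simp only [f, AffineMap.lineMap_apply, vsub_eq_sub, vadd_eq_add]
      module
    have h3 : (y : Fin d → ℝ) = (1 + e)⁻¹ • ((1 + e) • (y : Fin d → ℝ)) := by
      rw [smul_smul, inv_mul_cancel₀ (by positivity), one_smul]
    rw [h3, this, hc, Finset.smul_sum, ← Finset.sum_add_distrib, Finset.smul_sum]
    refine Finset.sum_congr rfl fun i _ => ?_
    rw [smul_smul, ← add_smul, smul_smul]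
    congr 1
    field_simp

/-- restriction of affine functionals to a point configuration -/
def resMap {d : ℕ} {ι : Type} (q : ι → Fin d → ℝ) : ((Fin d → ℝ) →ᵃ[ℝ] ℝ) →ₗ[ℝ] (ι → ℝ) where
  toFun φ := fun i => φ (q i)
  map_add' _ _ := rfl
  map_smul' _ _ := rfl

theorem affine_zero_span {d : ℕ} {F : Type} [AddCommGroup F] [Module ℝ F] {ι : Type}
    (q : ι → Fin d → ℝ) (β : (Fin d → ℝ) →ᵃ[ℝ] F)
    (hβ : ∀ i, β (q i) = 0) : ∀ y ∈ affineSpan ℝ (convexHull ℝ (Set.range q)), β y = 0 := by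
  intro y hy
  rw [affineSpan_convexHull] at hy
  refine affineSpan_induction (p := fun y => β y = 0) hy ?_ ?_
  · rintro _ ⟨i, rfl⟩; exact hβ i
  · intro c u v w hu hv hw
    rw [AffineMap.map_vadd, map_smul, AffineMap.linearMap_vsub, hu, hv, hw]
    simp

theorem affine_zero_dir {d : ℕ} {F : Type} [AddCommGroup F] [Module ℝ F]
    (A : AffineSubspace ℝ (Fin d → ℝ)) (hA : (A : Set (Fin d → ℝ)).Nonempty)
    (β : (Fin d → ℝ) →ᵃ[ℝ] F)
    (hβ : ∀ y ∈ A, β y = 0) : ∀ v ∈ A.direction, β.linear v = 0 := by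
  intro v hv
  obtain ⟨p, hp⟩ := hA
  have h1 := hβ _ (AffineSubspace.vadd_mem_of_mem_direction hv hp)
  rw [AffineMap.map_vadd, hβ p hp] at h1
  simpa using h1

theorem facet_lemma {d : ℕ} {ι : Type} [Fintype ι] (q : ι → Fin d → ℝ)
    (φ : (Fin d → ℝ) →ᵃ[ℝ] ℝ) (hk : IsMinSupp (LinearMap.range (resMap q)) (resMap q φ))
    (i0 : ι) (hi0 : φ (q i0) = 0) :
    IsFacet (convexHull ℝ (Set.range q)) {y ∈ convexHull ℝ (Set.range q) | φ y = 0} := by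
  classical
  set Q := convexHull ℝ (Set.range q) with hQ
  have hqQ : ∀ i, q i ∈ Q := fun i => subset_convexHull _ _ ⟨i, rfl⟩
  have hpos : ∀ y ∈ Q, 0 ≤ φ y := by
    intro y hy
    obtain ⟨w, hw0, hw1, rfl⟩ := hull_rep q y hy
    rw [affine_sum φ w q hw1]
    exact Finset.sum_nonneg fun i _ => mul_nonneg (hw0 i) (hk.2.1 i)
  have hdec : ∀ y, φ y = φ.linear y + φ 0 := fun y => congrFun φ.decomp y
  refine ⟨fun _ => ⟨-(LinearMap.toContinuousLinearMap φ.linear), ?_⟩, ⟨q i0, hqQ i0, hi0⟩, ?_⟩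
  · ext y
    simp only [Set.mem_ofPred_eq]
    refine and_congr_right fun hy => ⟨fun h z hz => ?_, fun h => ?_⟩
    · have := hpos z hz
      rw [hdec] at h this
      simp only [neg_apply, LinearMap.coe_toContinuousLinearMap']
      linarith
    · have h1 := h (q i0) (hqQ i0)
      have h2 := hpos y hy
      simp only [neg_apply, LinearMap.coe_toContinuousLinearMap'] at h1
      rw [hdec] at h2 hi0 ⊢
      linarith
  · set F := {y ∈ Q | φ y = 0} with hF
    have hQne : (affineSpan ℝ Q : Set (Fin d → ℝ)).Nonempty := ⟨q i0, subset_affineSpan _ _ (hqQ i0)⟩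
    set D := (affineSpan ℝ Q).direction with hD
    have key : (affineSpan ℝ F).direction = D ⊓ LinearMap.ker φ.linear := by
      apply le_antisymm
      · refine le_inf (AffineSubspace.direction_le (affineSpan_mono _ (fun y hy => hy.1))) ?_
        rw [direction_affineSpan, vectorSpan_def, Submodule.span_le]
        rintro _ ⟨a, ha, b, hb, rfl⟩
        simp only [SetLike.mem_coe, LinearMap.mem_ker]
        rw [AffineMap.linearMap_vsub, ha.2, hb.2]; simp
      · rintro v ⟨hvD, hvk⟩
        by_contra hv
        obtain ⟨f, hfv, hf⟩ := Submodule.exists_le_ker_of_notMem hv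
        let β : (Fin d → ℝ) →ᵃ[ℝ] ℝ := f.toAffineMap - AffineMap.const ℝ _ (f (q i0))
        have hβ : ∀ i, resMap q φ i = 0 → resMap q β i = 0 := by
          intro i hi
          have hm : q i - q i0 ∈ (affineSpan ℝ F).direction :=
            AffineSubspace.vsub_mem_direction (subset_affineSpan _ _ ⟨hqQ i, hi⟩)
              (subset_affineSpan _ _ ⟨hqQ i0, hi0⟩)
          have := hf hm
          rw [LinearMap.mem_ker, map_sub] at this
          exact this
        obtain ⟨t, ht⟩ := hk.unique (resMap q β) ⟨β, rfl⟩ hβ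
        have h0 : ∀ i, (β - t • φ) (q i) = 0 := by
          intro i
          have := congrFun ht i
          change β (q i) = t * φ (q i) at this
          change β (q i) - t * φ (q i) = 0
          linarith
        have h1 := affine_zero_dir _ hQne _ (affine_zero_span q _ h0) v hvD
        have h2 : (β - t • φ).linear v = f v - t * φ.linear v := by
          simp [β]
        rw [h2, LinearMap.mem_ker.1 hvk] at h1
        apply hfv; linarith
    have hne : φ.linear.domRestrict D ≠ 0 := by
      intro h
      apply hk.2.2.1
      ext i
      have hm : q i - q i0 ∈ D :=
            AffineSubspace.vsub_mem_direction (subset_affineSpan _ _ (hqQ i))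
              (subset_affineSpan _ _ (hqQ i0))
      have h1 := LinearMap.congr_fun h ⟨_, hm⟩
      simp only [LinearMap.domRestrict_apply, LinearMap.zero_apply] at h1
      change φ (q i) = 0
      rw [map_sub] at h1
      rw [hdec] at hi0 ⊢
      linarith
    have hr : Module.finrank ℝ (LinearMap.range (φ.linear.domRestrict D)) = 1 := by
      rw [LinearMap.range_eq_top.2 (LinearMap.surjective hne)]
      simp
    have := LinearMap.finrank_range_add_finrank_ker (φ.linear.domRestrict D)
    unfold polyDim
    rw [key, ← hD, ← this, hr, LinearMap.ker_domRestrict, ← Submodule.map_comap_subtype,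
      Submodule.finrank_map_subtype_eq]
    omega
theorem minSupp_zero {d : ℕ} {ι : Type} [Fintype ι] (q : ι → Fin d → ℝ) (i1 i2 : ι)
    (h12 : q i1 ≠ q i2) (k : ι → ℝ) (hk : IsMinSupp (LinearMap.range (resMap q)) k) :
    ∃ i, k i = 0 := by
  classical
  obtain ⟨j, hj⟩ := Function.ne_iff.1 h12
  obtain ⟨i0, -, hi0⟩ := Finset.exists_min_image Finset.univ (fun i => q i j) ⟨i1, Finset.mem_univ _⟩
  by_contra hno
  push Not at hno
  let g : (Fin d → ℝ) →ᵃ[ℝ] ℝ := (LinearMap.proj j : (Fin d → ℝ) →ₗ[ℝ] ℝ).toAffineMap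
    - AffineMap.const ℝ _ (q i0 j)
  have hg : ∀ i, resMap q g i = q i j - q i0 j := fun i => rfl
  refine hno i0 (hk.2.2.2 (resMap q g) ⟨g, rfl⟩ (fun i => ?_) ?_ ?_ i0 ?_)
  · rw [hg]; have := hi0 i (Finset.mem_univ _); linarith
  · intro h
    have h1 := congrFun h i1
    have h2 := congrFun h i2
    rw [hg] at h1 h2
    simp only [Pi.zero_apply] at h1 h2
    apply hj; linarith
  · intro i hi; exact absurd hi (hno i)
  · rw [hg]; ring

theorem smul_hull {d : ℕ} {ι : Type} (p : ι → Fin d → ℝ) (r : ℝ) :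
    r • convexHull ℝ (Set.range p) = convexHull ℝ (Set.range fun i => r • p i) := by
  rw [← convexHull_smul]
  congr 1
  ext y
  simp [Set.mem_smul_set]

theorem IsLatticePt.add {d : ℕ} {x y : Fin d → ℝ} (hx : IsLatticePt x) (hy : IsLatticePt y) :
    IsLatticePt (x + y) := by
  intro i
  obtain ⟨a, ha⟩ := hx i
  obtain ⟨b, hb⟩ := hy i
  exact ⟨a + b, by simp [ha, hb]⟩

theorem IsLatticePt.sub {d : ℕ} {x y : Fin d → ℝ} (hx : IsLatticePt x) (hy : IsLatticePt y) :
    IsLatticePt (x - y) := by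
  intro i
  obtain ⟨a, ha⟩ := hx i
  obtain ⟨b, hb⟩ := hy i
  exact ⟨a - b, by simp [ha, hb]⟩

theorem IsLatticePt.nsmul {d : ℕ} {x : Fin d → ℝ} (hx : IsLatticePt x) (n : ℤ) :
    IsLatticePt ((n : ℝ) • x) := by
  intro i
  obtain ⟨a, ha⟩ := hx i
  exact ⟨n * a, by simp [ha]⟩

theorem per_facet {d : ℕ} {ι : Type} [Fintype ι] (p : ι → Fin d → ℝ) (hp : ∀ i, IsLatticePt (p i))
    (i1 i2 : ι) (h12 : p i1 ≠ p i2) (r : ℕ) (hr : 0 < r) (x : Fin d → ℝ)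
    (hF : ∀ F : Set (Fin d → ℝ), IsFacet (convexHull ℝ (Set.range fun i => (r : ℝ) • p i)) F →
      ∃ u : (Fin d → ℝ) →ᵃ[ℝ] ℝ,
        IsIntegralOn (convexHull ℝ (Set.range fun i => (r : ℝ) • p i)) u ∧ ∀ f ∈ F, u f = u x + 1)
    (w : ι → ℝ) (hw0 : ∀ i, 0 < w i) (hw1 : ∑ i, w i = 1) (hw : ∑ i, w i • ((r : ℝ) • p i) = x)
    (k : ι → ℝ) (hk : IsMinSupp (LinearMap.range (resMap fun i => (r : ℝ) • p i)) k) :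
    ∃ (α : (Fin d → ℝ) →ᵃ[ℝ] ℝ) (t : ℝ), 0 < t ∧ (∀ i, α (p i) = t * k i) ∧
      IsIntegralOn (convexHull ℝ (Set.range p)) α ∧ ∑ i, α (p i) * (r * w i) = 1 := by
  have hr' : (0:ℝ) < r := by exact_mod_cast hr
  set q : ι → Fin d → ℝ := fun i => (r : ℝ) • p i with hq
  obtain ⟨i0, hi0⟩ := minSupp_zero q i1 i2 (by
    intro h; exact h12 (smul_right_injective _ hr'.ne' h)) k hk
  obtain ⟨φ, rfl⟩ := hk.1
  obtain ⟨u, hu, huF⟩ := hF _ (facet_lemma q φ hk i0 hi0)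
  let ψ : (Fin d → ℝ) →ᵃ[ℝ] ℝ := AffineMap.const ℝ _ (u x + 1) - u
  have hψ : ∀ y, ψ y = u x + 1 - u y := fun y => rfl
  have hqQ : ∀ i, q i ∈ convexHull ℝ (Set.range q) := fun i => subset_convexHull _ _ ⟨i, rfl⟩
  have hz : ∀ i, resMap q φ i = 0 → resMap q ψ i = 0 := by
    intro i hi
    change ψ (q i) = 0
    rw [hψ, huF (q i) ⟨hqQ i, hi⟩]; ring
  obtain ⟨t, ht⟩ := hk.unique _ ⟨ψ, rfl⟩ hz
  have ht' : ∀ i, ψ (q i) = t * φ (q i) := fun i => congrFun ht i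
  have hψx : ψ x = 1 := by rw [hψ]; ring
  have hsum : ∑ i, w i * ψ (q i) = 1 := by
    rw [← hψx, ← hw, affine_sum ψ w _ hw1]; rfl
  have htpos : 0 < t := by
    have h1 : t * ∑ i, w i * φ (q i) = 1 := by
      rw [← hsum, Finset.mul_sum]
      exact Finset.sum_congr rfl fun i _ => by rw [ht']; ring
    have h2 : 0 ≤ ∑ i, w i * φ (q i) :=
      Finset.sum_nonneg fun i _ => mul_nonneg (hw0 i).le (hk.2.1 i)
    by_contra hneg
    have := mul_nonneg (by linarith : 0 ≤ -t) h2
    linarith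
  let α : (Fin d → ℝ) →ᵃ[ℝ] ℝ :=
    (1 / (r : ℝ)) • ψ.comp ((r : ℝ) • (LinearMap.id : (Fin d → ℝ) →ₗ[ℝ] _)).toAffineMap
  have hα : ∀ y, α y = (1 / (r : ℝ)) * ψ ((r : ℝ) • y) := fun y => rfl
  refine ⟨α, t / r, by positivity, fun i => ?_, ?_, ?_⟩
  · rw [hα]
    have := ht' i
    simp only [hq] at this
    rw [this]; change _ = t / r * φ (q i); simp only [hq]; ring
  · intro y hy hyl
    have hmem : q i0 + (y - p i0) ∈ affineSpan ℝ (convexHull ℝ (Set.range q)) := by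
      rw [affineSpan_convexHull] at hy
      have hm : ∀ i, q i ∈ affineSpan ℝ (convexHull ℝ (Set.range q)) :=
        fun i => subset_affineSpan _ _ (hqQ i)
      refine affineSpan_induction
        (p := fun y => q i0 + (y - p i0) ∈ affineSpan ℝ (convexHull ℝ (Set.range q))) hy ?_ ?_
      · rintro _ ⟨i, rfl⟩
        have := AffineSubspace.smul_vsub_vadd_mem _ (1 / (r:ℝ)) (hm i) (hm i0) (hm i0)
        convert this using 1
        simp only [hq, vsub_eq_sub, vadd_eq_add, ← smul_sub, smul_smul]
        rw [one_div, inv_mul_cancel₀ hr'.ne', one_smul, add_comm]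
      · intro c a b e ha hb he
        have := AffineSubspace.smul_vsub_vadd_mem _ c ha hb he
        convert this using 1
        simp only [vsub_eq_sub, vadd_eq_add]
        module
    have hlat : IsLatticePt (q i0 + (y - p i0)) := by
      refine IsLatticePt.add ?_ (hyl.sub (hp i0))
      have := (hp i0).nsmul r
      simpa [hq] using this
    have hlatx : ∃ z : ℤ, u x = z := by
      obtain ⟨z, hz⟩ := hu (q i0) (subset_affineSpan _ _ (hqQ i0)) (by
        have := (hp i0).nsmul r
        simpa [hq] using this)
      have := huF (q i0) ⟨hqQ i0, hi0⟩
      exact ⟨z - 1, by push_cast; linarith⟩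
    obtain ⟨z1, hz1⟩ := hlatx
    obtain ⟨z2, hz2⟩ := hu _ hmem hlat
    have hdec : ∀ y, ψ y = ψ.linear y + ψ 0 := fun y => congrFun ψ.decomp y
    have h0 : ψ (q i0) = 0 := hz i0 hi0
    have : α y = ψ (q i0 + (y - p i0)) := by
      rw [hα, hdec]
      rw [hdec] at h0
      rw [hdec (q i0 + _), map_add, map_sub, map_smul]
      simp only [hq, map_smul, smul_eq_mul] at h0 ⊢
      field_simp
      linear_combination (1 - (r:ℝ)) * h0
    refine ⟨z1 + 1 - z2, ?_⟩
    rw [this, hψ, hz1, hz2]; push_cast; ring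
  · rw [← hsum]
    refine Finset.sum_congr rfl fun i _ => ?_
    rw [hα]
    simp only [hq]
    field_simp

theorem geom {d : ℕ} {ι : Type} [Fintype ι] (p : ι → Fin d → ℝ) (hp : ∀ i, IsLatticePt (p i))
    (i1 i2 : ι) (h12 : p i1 ≠ p i2) (r : ℕ) (hr : 0 < r)
    (hR : IsReflexivePolytope ((r : ℝ) • convexHull ℝ (Set.range p))) :
    ∃ (n : ℕ) (α : Fin n → (Fin d → ℝ) →ᵃ[ℝ] ℝ) (a : Fin n → ι → ℕ) (l : ι → ℝ) (m : Fin n → ℝ),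
      GData a l m r ∧ (∀ u i, α u (p i) = a u i) ∧
      (∀ u, IsIntegralOn (convexHull ℝ (Set.range p)) (α u)) ∧
      ∀ φ : (Fin d → ℝ) →ᵃ[ℝ] ℝ, ∃ c : Fin n → ℝ, ∀ i, φ (p i) = ∑ u, c u * a u i := by
  have hr' : (0:ℝ) < r := by exact_mod_cast hr
  rw [smul_hull] at hR
  obtain ⟨x, hx, hxl, hF⟩ := hR
  have : Nonempty ι := ⟨i1⟩
  obtain ⟨w, hw0, hw1, hw⟩ := strict_rep _ x hx
  obtain ⟨n, k, hk, hk1, hkK⟩ := minSupp_family (LinearMap.range (resMap fun i => (r : ℝ) • p i))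
    ⟨AffineMap.const ℝ _ 1, rfl⟩
  choose α t ht hαt hαi hα1 using fun j => per_facet p hp i1 i2 h12 r hr x hF w hw0 hw1 hw (k j) (hk j)
  have hnat : ∀ u i, ∃ a : ℕ, α u (p i) = a := by
    intro u i
    obtain ⟨z, hz⟩ := hαi u (p i) (subset_affineSpan _ _ (subset_convexHull _ _ ⟨i, rfl⟩)) (hp i)
    have : 0 ≤ α u (p i) := by rw [hαt]; exact mul_nonneg (ht u).le ((hk u).2.1 i)
    rw [hz] at this
    have hz0 : 0 ≤ z := by exact_mod_cast this
    lift z to ℕ using hz0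
    exact ⟨z, by rw [hz]; simp⟩
  choose a ha using hnat
  refine ⟨n, α, a, fun i => r * w i, fun u => 1 / t u, ⟨?_, ?_, ?_, ?_, ?_⟩, ha, hαi, ?_⟩
  · intro v; have := hw0 v; positivity
  · intro u; have := ht u; positivity
  · intro u; rw [← hα1 u]; simp_rw [← ha]
  · intro v
    simp_rw [← ha, hαt]
    have := congrFun hk1 v
    rw [Finset.sum_apply] at this
    refine Eq.trans (Finset.sum_congr rfl fun u _ => ?_) this
    have := (ht u).ne'
    field_simp
  · rw [← Finset.mul_sum, hw1, mul_one]
  · intro φ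
    let φ' : (Fin d → ℝ) →ᵃ[ℝ] ℝ :=
      φ.comp ((1 / (r : ℝ)) • (LinearMap.id : (Fin d → ℝ) →ₗ[ℝ] _)).toAffineMap
    have hφ' : ∀ y, φ' y = φ ((1 / (r:ℝ)) • y) := fun y => rfl
    have hm := hkK (LinearMap.mem_range_self _ φ')
    obtain ⟨c, hc⟩ := (Submodule.mem_span_range_iff_exists_fun ℝ).1 hm
    refine ⟨fun u => c u / t u, fun i => ?_⟩
    have h1 := congrFun hc i
    rw [Finset.sum_apply] at h1
    have h2 : resMap (fun i => (r : ℝ) • p i) φ' i = φ (p i) := by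
      change φ' _ = _
      rw [hφ', smul_smul, one_div, inv_mul_cancel₀ hr'.ne', one_smul]
    rw [← h2, ← h1]
    refine Finset.sum_congr rfl fun u _ => ?_
    rw [← ha, hαt]
    have := (ht u).ne'
    simp only [Pi.smul_apply, smul_eq_mul]
    field_simp
theorem rank_bound {d n : ℕ} {ι : Type} [Fintype ι] (p : ι → Fin d → ℝ) (i0 : ι)
    (α : Fin n → (Fin d → ℝ) →ᵃ[ℝ] ℝ) (a : Fin n → ι → ℕ) (ha : ∀ u i, α u (p i) = a u i) :
    (Matrix.of fun u v => (a u v : ℝ)).rank ≤ polyDim (convexHull ℝ (Set.range p)) + 1 := by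
  classical
  set D := (affineSpan ℝ (convexHull ℝ (Set.range p))).direction with hD
  let L : (Fin d → ℝ) →ₗ[ℝ] (Fin n → ℝ) := LinearMap.pi fun u => (α u).linear
  have hm : ∀ i, p i ∈ affineSpan ℝ (convexHull ℝ (Set.range p)) :=
        fun i => subset_affineSpan _ _ (subset_convexHull _ _ ⟨i, rfl⟩)
  rw [Matrix.rank_eq_finrank_span_cols]
  have hle : Submodule.span ℝ (Set.range (Matrix.of fun u v => (a u v : ℝ)).col) ≤
      D.map L ⊔ Submodule.span ℝ {fun u => (a u i0 : ℝ)} := by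
    rw [Submodule.span_le]
    rintro _ ⟨i, rfl⟩
    have : (Matrix.of fun u v => (a u v : ℝ)).col i = L (p i - p i0) + fun u => (a u i0 : ℝ) := by
      ext u
      have h1 : (α u).linear (p i - p i0) = α u (p i) - α u (p i0) := by
        rw [← vsub_eq_sub, AffineMap.linearMap_vsub]; rfl
      simp only [Matrix.col_apply, Matrix.of_apply, Pi.add_apply]
      change _ = (α u).linear (p i - p i0) + _
      rw [h1, ha, ha]; ring
    rw [this]
    refine Submodule.add_mem_sup ?_ (Submodule.mem_span_singleton_self _)
    exact Submodule.mem_map_of_mem (AffineSubspace.vsub_mem_direction (hm i) (hm i0))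
  refine (Submodule.finrank_mono hle).trans ?_
  refine (Submodule.finrank_add_le_finrank_add_finrank _ _).trans ?_
  refine add_le_add (Submodule.finrank_map_le _ _) ?_
  refine (finrank_span_le_card _).trans ?_
  simp

theorem latticeIso_mk {d e : ℕ} (P : Set (Fin d → ℝ)) (f : (Fin d → ℝ) →ᵃ[ℝ] (Fin e → ℝ))
    (g : (Fin e → ℝ) →ᵃ[ℝ] (Fin d → ℝ)) (hgf : ∀ x ∈ affineSpan ℝ P, g (f x) = x)
    (hf : ∀ x ∈ affineSpan ℝ P, IsLatticePt x → IsLatticePt (f x))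
    (hg : ∀ x ∈ affineSpan ℝ P, IsLatticePt (f x) → IsLatticePt x) : LatticeIso P (f '' P) := by
  have hmap : ∀ y ∈ affineSpan ℝ (f '' P), ∃ x ∈ affineSpan ℝ P, f x = y := by
    intro y hy
    rw [← AffineSubspace.map_span] at hy
    exact hy
  refine ⟨f, g, rfl, ?_, hgf, ?_, hf, ?_⟩
  · rw [Set.image_image]
    ext y
    constructor
    · rintro ⟨x, hx, rfl⟩
      change g (f x) ∈ P
      rwa [hgf x (subset_affineSpan _ _ hx)]
    · intro hy
      exact ⟨y, hy, hgf y (subset_affineSpan _ _ hy)⟩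
  · intro y hy
    obtain ⟨x, hx, rfl⟩ := hmap y hy
    rw [hgf x hx]
  · intro y hy hyl
    obtain ⟨x, hx, rfl⟩ := hmap y hy
    rw [hgf x hx]
    exact hg x hx hyl

def snocL (d : ℕ) : ((Fin d → ℝ) × ℝ) →ₗ[ℝ] (Fin (d + 1) → ℝ) where
  toFun y := Fin.snoc (α := fun _ => ℝ) y.1 y.2
  map_add' x y := by
    ext i
    refine Fin.lastCases ?_ (fun j => ?_) i <;> simp
  map_smul' c y := by
    ext i
    refine Fin.lastCases ?_ (fun j => ?_) i <;> simp

def unsnocL (d : ℕ) : (Fin (d + 1) → ℝ) →ₗ[ℝ] ((Fin d → ℝ) × ℝ) where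
  toFun y := (fun j => y j.castSucc, y (Fin.last d))
  map_add' _ _ := rfl
  map_smul' _ _ := rfl

theorem unsnoc_snoc (d : ℕ) (y : (Fin d → ℝ) × ℝ) : unsnocL d (snocL d y) = y := by
  ext <;> simp [unsnocL, snocL]

theorem isLatticePt_snoc {d : ℕ} (y : (Fin d → ℝ) × ℝ) :
    IsLatticePt (snocL d y) ↔ IsLatticePt y.1 ∧ ∃ z : ℤ, y.2 = z := by
  constructor
  · intro h
    refine ⟨fun i => ?_, ?_⟩
    · simpa [snocL] using h i.castSucc
    · simpa [snocL] using h (Fin.last d)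
  · rintro ⟨h1, h2⟩ i
    refine Fin.lastCases ?_ (fun j => ?_) i
    · simpa [snocL] using h2
    · simpa [snocL] using h1 j

theorem pyramid_lemma {d : ℕ} {ι : Type} [Fintype ι] (p : ι → Fin d → ℝ)
    (hp : ∀ i, IsLatticePt (p i)) (α : (Fin d → ℝ) →ᵃ[ℝ] ℝ)
    (hα : IsIntegralOn (convexHull ℝ (Set.range p)) α) (w : ι) (hw : α (p w) = 1)
    (h0 : ∀ v, v ≠ w → α (p v) = 0) : IsLatticePyramid (convexHull ℝ (Set.range p)) := by
  classical
  by_cases hex : ∃ v, v ≠ w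
  swap
  · push Not at hex
    left
    refine ⟨p w, hp w, ?_⟩
    have : Set.range p = {p w} := by
      ext y; constructor
      · rintro ⟨v, rfl⟩; rw [hex v]; rfl
      · rintro rfl; exact ⟨w, rfl⟩
    rw [this, convexHull_singleton]
  obtain ⟨v1, hv1⟩ := hex
  right
  set S : Set (Fin d → ℝ) := (fun v => p v - p v1) '' {v | v ≠ w} with hS
  refine ⟨d, convexHull ℝ S, ⟨(Finset.univ.filter fun v => v ≠ w).image fun v => p v - p v1,
    ⟨0, ?_⟩, ?_, ?_⟩, ?_⟩
  · rw [Finset.mem_image]; exact ⟨v1, by simpa using hv1, by simp⟩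
  · intro v hv
    rw [Finset.mem_image] at hv
    obtain ⟨v, -, rfl⟩ := hv
    exact (hp v).sub (hp v1)
  · congr 1
    ext y; simp [hS]
  · let e : Fin d → ℝ := p w - p v1
    let f1 : (Fin d → ℝ) →ᵃ[ℝ] (Fin d → ℝ) :=
      AffineMap.id ℝ _ - AffineMap.const ℝ _ (p v1) -
        (LinearMap.toSpanSingleton ℝ (Fin d → ℝ) e).toAffineMap.comp α
    have hf1 : ∀ x, f1 x = x - p v1 - α x • e := fun x => rfl
    let f : (Fin d → ℝ) →ᵃ[ℝ] (Fin (d+1) → ℝ) := (snocL d).toAffineMap.comp (f1.prod α)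
    have hf : ∀ x, f x = snocL d (x - p v1 - α x • e, α x) := fun x => rfl
    let g : (Fin (d+1) → ℝ) →ᵃ[ℝ] (Fin d → ℝ) :=
      ((LinearMap.fst ℝ (Fin d → ℝ) ℝ + (LinearMap.toSpanSingleton ℝ (Fin d → ℝ) e).comp
        (LinearMap.snd ℝ (Fin d → ℝ) ℝ)).comp (unsnocL d)).toAffineMap + AffineMap.const ℝ _ (p v1)
    have hg : ∀ y, g y = (unsnocL d y).1 + (unsnocL d y).2 • e + p v1 := fun y => rfl
    have himg : f '' (convexHull ℝ (Set.range p)) = pyramidOver (convexHull ℝ S) := by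
      unfold pyramidOver
      have hσ : (fun x : Fin d → ℝ => (Fin.snoc x (0:ℝ) : Fin (d+1) → ℝ)) =
        (snocL d).comp (LinearMap.inl ℝ (Fin d → ℝ) ℝ) := rfl
      rw [hσ, LinearMap.image_convexHull, convexHull_convexHull_union_left, AffineMap.image_convexHull]
      congr 1
      have h1 : ∀ v, v ≠ w → f (p v) = snocL d (p v - p v1, 0) := by
        intro v hv; rw [hf, h0 v hv]; simp
      have h2 : f (p w) = (Fin.snoc (0 : Fin d → ℝ) (1:ℝ) : Fin (d+1) → ℝ) := by
        rw [hf, hw]; simp [e]; rfl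
      ext y
      constructor
      · rintro ⟨_, ⟨v, rfl⟩, rfl⟩
        by_cases hv : v = w
        · subst hv; right; exact h2
        · left; exact ⟨_, ⟨v, hv, rfl⟩, (h1 v hv).symm⟩
      · rintro (⟨_, ⟨v, hv, rfl⟩, rfl⟩ | hy)
        · exact ⟨_, ⟨v, rfl⟩, h1 v hv⟩
        · exact ⟨_, ⟨w, rfl⟩, h2.trans hy.symm⟩
    rw [← himg]
    have hel : IsLatticePt e := (hp w).sub (hp v1)
    refine latticeIso_mk _ f g ?_ ?_ ?_
    · intro x _
      rw [hg, hf, unsnoc_snoc]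
      simp
    · intro x hx hxl
      obtain ⟨z, hz⟩ := hα x hx hxl
      rw [hf, isLatticePt_snoc]
      refine ⟨?_, z, hz⟩
      simp only [hz]
      exact (hxl.sub (hp v1)).sub (hel.nsmul z)
    · intro x hx hxl
      rw [hf, isLatticePt_snoc] at hxl
      obtain ⟨h1, z, hz⟩ := hxl
      simp only at h1 hz
      rw [hz] at h1
      have := (h1.add (hel.nsmul z)).add (hp v1)
      simpa using this
/-- a bounded integral coordinate chart for `P` -/
def GoodChart (L B : ℕ) {d : ℕ} (P : Set (Fin d → ℝ)) (V : Finset (Fin d → ℝ))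
    (Φ : (Fin d → ℝ) →ᵃ[ℝ] (Fin L → ℝ)) : Prop :=
  V.Nonempty ∧ P = convexHull ℝ (V : Set (Fin d → ℝ)) ∧ (∀ v ∈ V, IsLatticePt v) ∧
  (∀ v ∈ V, ∀ j, ∃ b : ℕ, b ≤ B ∧ Φ v j = b) ∧
  (∀ x ∈ affineSpan ℝ P, IsLatticePt x → IsLatticePt (Φ x)) ∧
  (∀ x ∈ affineSpan ℝ P, ∀ y ∈ affineSpan ℝ P, Φ x = Φ y → x = y)

theorem gor_chart (s : ℕ) (hs : 0 < s) : ∃ L B : ℕ, ∀ (d : ℕ) (P : Set (Fin d → ℝ)),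
    IsLatticePolytope P → IsGorenstein P → polyDeg P = s → ¬ IsLatticePyramid P →
    ∃ V Φ, GoodChart L B P V Φ := by
  classical
  obtain ⟨B, hB⟩ := GData.bound (12 * s) (11 * s)
  refine ⟨12 * s, B, ?_⟩
  intro d P hP hG hdeg hnp
  obtain ⟨V, hVne, hVl, hPV⟩ := hP
  obtain ⟨r, hr, hR⟩ := hG
  let ι := {v // v ∈ V}
  let p : ι → Fin d → ℝ := Subtype.val
  have hrange : Set.range p = (V : Set (Fin d → ℝ)) := by
    simp [p, ι]
  have hPp : P = convexHull ℝ (Set.range p) := by rw [hrange, hPV]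
  have hp : ∀ i, IsLatticePt (p i) := fun i => hVl _ i.2
  have hnh : r ∈ {r : ℕ | 0 < r ∧ ¬ IsHollow ((r : ℝ) • P)} := by
    obtain ⟨x, hx, hxl, -⟩ := hR
    exact ⟨hr, fun h => h x hx hxl⟩
  have hc1 : polyCodeg P ≤ r := Nat.sInf_le hnh
  have hc2 : 0 < polyCodeg P := (Nat.sInf_mem ⟨r, hnh⟩).1
  have hdim : polyDim P + 1 = polyCodeg P + s := by
    unfold polyDeg at hdeg; omega
  obtain ⟨v0, hv0⟩ := hVne
  let i1 : ι := ⟨v0, hv0⟩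
  have h12 : ∃ i2, p i1 ≠ p i2 := by
    by_contra hno
    push Not at hno
    have : Set.range p = {p i1} := by
      ext y; constructor
      · rintro ⟨v, rfl⟩; exact (hno v).symm
      · rintro rfl; exact ⟨i1, rfl⟩
    have h0 : polyDim P = 0 := by
      unfold polyDim
      rw [hPp, this, convexHull_singleton, direction_affineSpan, vectorSpan_singleton]
      simp
    omega
  obtain ⟨i2, h12⟩ := h12
  rw [hPp] at hR
  obtain ⟨n, α, a, l, m, D, ha, hαi, hspan⟩ := geom p hp i1 i2 h12 r hr hR
  have hrank0 := rank_bound p i1 α a ha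
  rw [← hPp, hdim] at hrank0
  have hrank : (Matrix.of fun u v => (a u v : ℝ)).rank ≤ r + s := by omega
  have hsep : ∀ v v', (∀ u, a u v = a u v') → p v = p v' := by
    intro v v' h
    ext j
    obtain ⟨c, hc⟩ := hspan (LinearMap.proj j : (Fin d → ℝ) →ₗ[ℝ] ℝ).toAffineMap
    have h1 := hc v
    have h2 := hc v'
    simp only [h] at h1
    rw [← h2] at h1
    exact h1
  have hr11 : r ≤ 11 * s := by
    refine D.dimbound hrank (fun v v' h => Subtype.ext (hsep v v' h)) ?_
    intro u w huw hle
    by_contra hno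
    push Not at hno
    apply hnp
    rw [hPp]
    refine pyramid_lemma p hp (α u) (hαi u) w (by rw [ha, huw]; simp) (fun v hv => ?_)
    rw [ha, hno v hv]; simp
  have hrankL : (Matrix.of fun u v => (a u v : ℝ)).rank ≤ 12 * s := by omega
  have hBa : ∀ u v, a u v ≤ B := hB _ _ a l m r D hrankL hr11
  -- choose rows
  let row : Fin n → ι → ℝ := fun u v => a u v
  obtain ⟨M, hM, t, htr, hts⟩ : ∃ M : ℕ, M = Module.finrank ℝ (Submodule.span ℝ (Set.range row)) ∧
      ∃ t : Fin M → ι → ℝ, (∀ i, t i ∈ Set.range row) ∧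
        Submodule.span ℝ (Set.range t) = Submodule.span ℝ (Set.range row) := by
    obtain ⟨t, h1, h2, -⟩ := Submodule.exists_fun_fin_finrank_span_eq ℝ (Set.range row)
    exact ⟨_, rfl, t, h1, h2⟩
  choose k hk using htr
  have hML : M ≤ 12 * s := by
    rw [Matrix.rank_eq_finrank_span_row] at hrankL
    rw [hM]; exact hrankL
  let β : Fin (12 * s) → (Fin d → ℝ) →ᵃ[ℝ] ℝ := fun j =>
    if h : (j : ℕ) < M then α (k ⟨j, h⟩) else 0
  have hβ : ∀ j : Fin M, β (Fin.castLE hML j) = α (k j) := by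
    intro j; simp [β]
  have hβi : ∀ j, IsIntegralOn P (β j) := by
    intro j
    by_cases h : (j : ℕ) < M
    · simp only [β, h, dif_pos]; rw [hPp]; exact hαi _
    · simp only [β, h]; intro y _ _; exact ⟨0, by simp⟩
  refine ⟨V, AffineMap.pi β, ⟨v0, hv0⟩, hPV, hVl, ?_, ?_, ?_⟩
  · intro v hv j
    change ∃ b : ℕ, b ≤ B ∧ β j v = b
    by_cases h : (j : ℕ) < M
    · simp only [β, h, dif_pos]; exact ⟨_, hBa _ ⟨v, hv⟩, ha _ ⟨v, hv⟩⟩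
    · simp only [β, h]; exact ⟨0, Nat.zero_le _, by simp⟩
  · intro x hx hxl j
    exact hβi j x hx hxl
  · intro x hx y hy hxy
    ext j
    let φ : (Fin d → ℝ) →ᵃ[ℝ] ℝ := (LinearMap.proj j : (Fin d → ℝ) →ₗ[ℝ] ℝ).toAffineMap
    obtain ⟨c, hc⟩ := hspan φ
    have hmem : resMap p φ ∈ Submodule.span ℝ (Set.range t) := by
      rw [hts]
      refine (Submodule.mem_span_range_iff_exists_fun ℝ).2 ⟨c, ?_⟩
      ext i
      rw [Finset.sum_apply]
      exact (hc i).symm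
    obtain ⟨e, he⟩ := (Submodule.mem_span_range_iff_exists_fun ℝ).1 hmem
    let γ : (Fin d → ℝ) →ᵃ[ℝ] ℝ := φ - ∑ i, e i • α (k i)
    have hγ : ∀ y, γ y = φ y - ∑ i, e i * α (k i) y := by
      intro y
      change φ y - (∑ i, e i • α (k i)) y = _
      congr 1
      have : ∀ (S : Finset (Fin M)), (∑ i ∈ S, e i • α (k i)) y = ∑ i ∈ S, e i * α (k i) y := by
        intro S
        induction S using Finset.induction_on with
        | empty => simp
        | insert i S hi ih =>
          rw [Finset.sum_insert hi, Finset.sum_insert hi, ← ih]; rfl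
      exact this _
    have hγ0 := affine_zero_span p γ (by
      intro i
      rw [hγ]
      have := congrFun he i
      rw [Finset.sum_apply] at this
      change _ = φ (p i) at this
      rw [← this, sub_eq_zero]
      refine Finset.sum_congr rfl fun u _ => ?_
      rw [ha, ← hk]; rfl)
    rw [← hPp] at hγ0
    have h1 := hγ0 x hx
    have h2 := hγ0 y hy
    rw [hγ] at h1 h2
    have h3 : ∀ i, α (k i) x = α (k i) y := by
      intro i
      have := congrFun hxy (Fin.castLE hML i)
      change β _ x = β _ y at this
      rwa [hβ] at this
    simp only [h3] at h1
    change φ x = φ y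
    linarith
theorem GoodChart.leftInv {L B d : ℕ} {P : Set (Fin d → ℝ)} {V : Finset (Fin d → ℝ)}
    {Φ : (Fin d → ℝ) →ᵃ[ℝ] (Fin L → ℝ)} (C : GoodChart L B P V Φ) :
    ∃ ρ : (Fin L → ℝ) →ᵃ[ℝ] (Fin d → ℝ), ∀ x ∈ affineSpan ℝ P, ρ (Φ x) = x := by
  obtain ⟨⟨v0, hv0⟩, hPV, hl, hb, hi, hinj⟩ := C
  have hv0P : v0 ∈ affineSpan ℝ P := by
    rw [hPV]; exact subset_affineSpan _ _ (subset_convexHull _ _ hv0)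
  set D := (affineSpan ℝ P).direction with hD
  have hker : LinearMap.ker (Φ.linear.domRestrict D) = ⊥ := by
    rw [LinearMap.ker_eq_bot']
    rintro ⟨v, hv⟩ h
    rw [LinearMap.domRestrict_apply] at h
    have := hinj _ (AffineSubspace.vadd_mem_of_mem_direction hv hv0P) _ hv0P (by
      rw [AffineMap.map_vadd, h]; simp)
    ext1
    simpa using this
  obtain ⟨g, hg⟩ := LinearMap.exists_leftInverse_of_injective _ hker
  refine ⟨(D.subtype.comp g).toAffineMap.comp (AffineMap.id ℝ _ - AffineMap.const ℝ _ (Φ v0)) +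
    AffineMap.const ℝ _ v0, fun x hx => ?_⟩
  have hxD : x - v0 ∈ D := AffineSubspace.vsub_mem_direction hx hv0P
  have h1 : Φ x - Φ v0 = Φ.linear.domRestrict D ⟨x - v0, hxD⟩ := by
    rw [LinearMap.domRestrict_apply]
    exact (AffineMap.linearMap_vsub Φ x v0).symm
  change ((g (Φ x - Φ v0) : D) : Fin d → ℝ) + v0 = x
  rw [h1]
  have := LinearMap.congr_fun hg ⟨x - v0, hxD⟩
  simp only [LinearMap.comp_apply, LinearMap.id_apply] at this
  rw [this]; simp

theorem span_rep {d : ℕ} (V : Finset (Fin d → ℝ)) (v0 : Fin d → ℝ) (x : Fin d → ℝ)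
    (hx : x ∈ affineSpan ℝ (V : Set (Fin d → ℝ))) :
    ∃ c : V → ℝ, x = v0 + ∑ v : V, c v • ((v : Fin d → ℝ) - v0) := by
  classical
  refine affineSpan_induction (p := fun x => ∃ c : V → ℝ, x = v0 + ∑ v : V, c v • ((v : Fin d → ℝ) - v0))
    hx ?_ ?_
  · intro v hv
    refine ⟨Pi.single ⟨v, hv⟩ 1, ?_⟩
    rw [Finset.sum_eq_single ⟨v, hv⟩]
    · simp
    · intro b _ hb; simp [hb]
    · simp
  · rintro t _ _ _ ⟨a, rfl⟩ ⟨b, rfl⟩ ⟨c, rfl⟩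
    refine ⟨fun v => t * (a v - b v) + c v, ?_⟩
    simp only [vsub_eq_sub, vadd_eq_add, add_smul, sub_smul, mul_smul, Finset.sum_add_distrib,
      ← Finset.smul_sum, Finset.sum_sub_distrib]
    module

theorem IsLatticePt.sum {d : ℕ} {ι : Type} (s : Finset ι) (f : ι → Fin d → ℝ)
    (h : ∀ i ∈ s, IsLatticePt (f i)) : IsLatticePt (∑ i ∈ s, f i) := by
  classical
  induction s using Finset.induction_on with
  | empty => intro i; exact ⟨0, by simp⟩
  | insert i s hi ih =>
    rw [Finset.sum_insert hi]
    exact (h i (Finset.mem_insert_self _ _)).add (ih fun j hj => h j (Finset.mem_insert_of_mem hj))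

theorem add_sum_mem {d : ℕ} {ι : Type} (A : AffineSubspace ℝ (Fin d → ℝ)) (s : Finset ι)
    (f : ι → Fin d → ℝ) (x y : Fin d → ℝ) (hx : x ∈ A) (hy : y ∈ A)
    (h : ∀ i ∈ s, f i ∈ A) (c : ι → ℝ) :
    y + ∑ i ∈ s, c i • (f i - x) ∈ A := by
  rw [add_comm]
  refine AffineSubspace.vadd_mem_of_mem_direction ?_ hy
  refine Submodule.sum_mem _ fun i hi => Submodule.smul_mem _ _ ?_
  exact AffineSubspace.vsub_mem_direction (h i hi) hx

theorem affine_add_sum {d L : ℕ} {ι : Type} (Φ : (Fin d → ℝ) →ᵃ[ℝ] (Fin L → ℝ)) (s : Finset ι)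
    (f : ι → Fin d → ℝ) (x y : Fin d → ℝ) (c : ι → ℝ) :
    Φ (y + ∑ i ∈ s, c i • (f i - x)) = Φ y + ∑ i ∈ s, c i • (Φ (f i) - Φ x) := by
  have h : ∀ i, Φ (f i) - Φ x = Φ.linear (f i - x) := fun i =>
    (AffineMap.linearMap_vsub Φ (f i) x).symm
  simp_rw [h, ← map_smul, ← map_sum]
  rw [add_comm y, ← vadd_eq_add, AffineMap.map_vadd, vadd_eq_add, add_comm]

theorem GoodChart.card {L B d : ℕ} {P : Set (Fin d → ℝ)} {V : Finset (Fin d → ℝ)}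
    {Φ : (Fin d → ℝ) →ᵃ[ℝ] (Fin L → ℝ)} (C : GoodChart L B P V Φ) : V.card ≤ (B + 1) ^ L := by
  obtain ⟨hne, hPV, hl, hb, hi, hinj⟩ := C
  choose b hb1 hb2 using hb
  have hvP : ∀ v ∈ V, v ∈ affineSpan ℝ P := fun v hv => by
    rw [hPV]; exact subset_affineSpan _ _ (subset_convexHull _ _ hv)
  let F : V → (Fin L → Fin (B + 1)) := fun v j => ⟨b v v.2 j, Nat.lt_succ_of_le (hb1 v v.2 j)⟩
  have hF : Function.Injective F := by
    intro v w h
    ext1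
    refine hinj _ (hvP _ v.2) _ (hvP _ w.2) ?_
    ext j
    rw [hb2 v v.2 j, hb2 w w.2 j]
    have := congrArg Fin.val (congrFun h j)
    simp only [F] at this
    rw [this]
  have := Fintype.card_le_of_injective F hF
  simpa using this

theorem transfer {L B M d d' : ℕ} (hM : B + (B + 1) ^ L * B ≤ M)
    {P : Set (Fin d → ℝ)} {V : Finset (Fin d → ℝ)}
    {Φ : (Fin d → ℝ) →ᵃ[ℝ] (Fin L → ℝ)} (C : GoodChart L B P V Φ)
    {P' : Set (Fin d' → ℝ)} {V' : Finset (Fin d' → ℝ)}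
    {Φ' : (Fin d' → ℝ) →ᵃ[ℝ] (Fin L → ℝ)} (C' : GoodChart L B P' V' Φ')
    (hV : ∀ v ∈ V, ∃ v' ∈ V', Φ' v' = Φ v)
    (hbox : ∀ y ∈ affineSpan ℝ P, IsLatticePt y → (∀ j, |Φ y j| ≤ M) →
      ∃ y' ∈ affineSpan ℝ P', IsLatticePt y' ∧ Φ' y' = Φ y) :
    ∀ x ∈ affineSpan ℝ P, IsLatticePt x → ∃ x' ∈ affineSpan ℝ P', IsLatticePt x' ∧ Φ' x' = Φ x := by
  classical
  intro x hx hxl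
  have hcard := C.card
  obtain ⟨⟨v0, hv0⟩, hPV, hl, hb, hi, hinj⟩ := C
  obtain ⟨-, hPV', hl', hb', hi', hinj'⟩ := C'
  have hvP : ∀ v ∈ V, v ∈ affineSpan ℝ P := fun v hv => by
    rw [hPV]; exact subset_affineSpan _ _ (subset_convexHull _ _ hv)
  have hvP' : ∀ v ∈ V', v ∈ affineSpan ℝ P' := fun v hv => by
    rw [hPV']; exact subset_affineSpan _ _ (subset_convexHull _ _ hv)
  obtain ⟨c, hc⟩ := span_rep V v0 x (by rwa [hPV, affineSpan_convexHull] at hx)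
  choose τ hτ hτΦ using hV
  set y := v0 + ∑ v : V, Int.fract (c v) • ((v : Fin d → ℝ) - v0) with hy
  have hxy : x = y + ∑ v : V, ((⌊c v⌋ : ℤ) : ℝ) • ((v : Fin d → ℝ) - v0) := by
    rw [hc, hy, add_assoc, ← Finset.sum_add_distrib]
    congr 1
    refine Finset.sum_congr rfl fun v _ => ?_
    rw [← add_smul, Int.fract_add_floor]
  have hyP : y ∈ affineSpan ℝ P :=
    add_sum_mem _ Finset.univ (fun v : V => (v : Fin d → ℝ)) v0 v0 (hvP _ hv0) (hvP _ hv0)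
      (fun v _ => hvP _ v.2) _
  have hyl : IsLatticePt y := by
    have : y = x - ∑ v : V, ((⌊c v⌋ : ℤ) : ℝ) • ((v : Fin d → ℝ) - v0) := by rw [hxy]; simp
    rw [this]
    exact hxl.sub (IsLatticePt.sum _ _ fun v _ => ((hl _ v.2).sub (hl _ hv0)).nsmul _)
  have hΦb : ∀ v ∈ V, ∀ j, 0 ≤ Φ v j ∧ Φ v j ≤ B := by
    intro v hv j
    obtain ⟨b, h1, h2⟩ := hb v hv j
    rw [h2]
    exact ⟨by positivity, by exact_mod_cast h1⟩
  have hyb : ∀ j, |Φ y j| ≤ M := by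
    intro j
    rw [hy, affine_add_sum Φ Finset.univ (fun v : V => (v : Fin d → ℝ)), Pi.add_apply, Finset.sum_apply]
    refine (abs_add_le _ _).trans ?_
    have h1 : |Φ v0 j| ≤ B := by
      rw [abs_of_nonneg (hΦb v0 hv0 j).1]; exact (hΦb v0 hv0 j).2
    have h2 : |∑ v : V, (Int.fract (c v) • (Φ v - Φ v0)) j| ≤ V.card * B := by
      refine (Finset.abs_sum_le_sum_abs _ _).trans ?_
      have : ∀ v ∈ (Finset.univ : Finset V), |(Int.fract (c v) • (Φ v - Φ v0)) j| ≤ B := by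
        intro v _
        rw [Pi.smul_apply, smul_eq_mul, abs_mul, abs_of_nonneg (Int.fract_nonneg _)]
        have h3 : |(Φ v - Φ v0) j| ≤ B := by
          rw [Pi.sub_apply, abs_le]
          have := hΦb v v.2 j
          have := hΦb v0 hv0 j
          constructor <;> linarith
        calc _ ≤ 1 * (B:ℝ) := mul_le_mul (Int.fract_lt_one _).le h3 (abs_nonneg _) zero_le_one
          _ = B := one_mul _
      refine (Finset.sum_le_card_nsmul _ _ _ this).trans ?_
      simp
    have h3 : (V.card : ℝ) * B ≤ (B + 1) ^ L * B := by
      refine mul_le_mul_of_nonneg_right ?_ (by positivity)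
      exact_mod_cast hcard
    have h4 : (B : ℝ) + (B + 1) ^ L * B ≤ M := by exact_mod_cast hM
    linarith
  obtain ⟨y', hy'P, hy'l, hy'Φ⟩ := hbox y hyP hyl hyb
  refine ⟨y' + ∑ v : V, ((⌊c v⌋ : ℤ) : ℝ) • (τ v v.2 - τ v0 hv0), ?_, ?_, ?_⟩
  · exact add_sum_mem _ Finset.univ (fun v : V => τ v v.2) _ _ (hvP' _ (hτ _ _)) hy'P
      (fun v _ => hvP' _ (hτ _ _)) _
  · exact hy'l.add (IsLatticePt.sum _ _ fun v _ => ((hl' _ (hτ _ _)).sub (hl' _ (hτ _ _))).nsmul _)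
  · rw [affine_add_sum Φ' Finset.univ (fun v : V => τ v v.2), hxy,
      affine_add_sum Φ Finset.univ (fun v : V => (v : Fin d → ℝ)), hy'Φ]
    simp_rw [hτΦ]

theorem iso_of_charts {L B M d d' : ℕ} (hM : B + (B + 1) ^ L * B ≤ M)
    {P : Set (Fin d → ℝ)} {V : Finset (Fin d → ℝ)}
    {Φ : (Fin d → ℝ) →ᵃ[ℝ] (Fin L → ℝ)} (C : GoodChart L B P V Φ)
    {P' : Set (Fin d' → ℝ)} {V' : Finset (Fin d' → ℝ)}
    {Φ' : (Fin d' → ℝ) →ᵃ[ℝ] (Fin L → ℝ)} (C' : GoodChart L B P' V' Φ')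
    (hV : ∀ v ∈ V, ∃ v' ∈ V', Φ' v' = Φ v) (hV' : ∀ v' ∈ V', ∃ v ∈ V, Φ v = Φ' v')
    (hbox : ∀ y ∈ affineSpan ℝ P, IsLatticePt y → (∀ j, |Φ y j| ≤ M) →
      ∃ y' ∈ affineSpan ℝ P', IsLatticePt y' ∧ Φ' y' = Φ y)
    (hbox' : ∀ y ∈ affineSpan ℝ P', IsLatticePt y → (∀ j, |Φ' y j| ≤ M) →
      ∃ y' ∈ affineSpan ℝ P, IsLatticePt y' ∧ Φ y' = Φ' y) : LatticeIso P P' := by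
  have T := transfer hM C C' hV hbox
  have T' := transfer hM C' C hV' hbox'
  obtain ⟨ρ, hρ⟩ := C.leftInv
  obtain ⟨ρ', hρ'⟩ := C'.leftInv
  obtain ⟨-, hPV, hl, hb, hi, hinj⟩ := C
  obtain ⟨-, hPV', hl', hb', hi', hinj'⟩ := C'
  have hvP : ∀ v ∈ V, v ∈ affineSpan ℝ P := fun v hv => by
    rw [hPV]; exact subset_affineSpan _ _ (subset_convexHull _ _ hv)
  have hvP' : ∀ v ∈ V', v ∈ affineSpan ℝ P' := fun v hv => by
    rw [hPV']; exact subset_affineSpan _ _ (subset_convexHull _ _ hv)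
  have hΦ : ∀ x ∈ affineSpan ℝ P, ∃ x' ∈ affineSpan ℝ P', Φ' x' = Φ x := by
    intro x hx
    rw [hPV, affineSpan_convexHull] at hx
    refine affineSpan_induction (p := fun x => ∃ x' ∈ affineSpan ℝ P', Φ' x' = Φ x) hx ?_ ?_
    · intro v hv
      obtain ⟨v', h1, h2⟩ := hV v hv
      exact ⟨v', hvP' _ h1, h2⟩
    · rintro c a b e ⟨a', ha, ha2⟩ ⟨b', hb, hb2⟩ ⟨e', he, he2⟩
      refine ⟨_, AffineSubspace.smul_vsub_vadd_mem _ c ha hb he, ?_⟩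
      rw [AffineMap.map_vadd, AffineMap.map_vadd, map_smul, map_smul, AffineMap.linearMap_vsub,
        AffineMap.linearMap_vsub, ha2, hb2, he2]
  have hf : ∀ x ∈ affineSpan ℝ P, ρ' (Φ x) ∈ affineSpan ℝ P' ∧ Φ' (ρ' (Φ x)) = Φ x := by
    intro x hx
    obtain ⟨x', h1, h2⟩ := hΦ x hx
    rw [← h2, hρ' x' h1]
    exact ⟨h1, rfl⟩
  have himg : (ρ'.comp Φ) '' P = P' := by
    rw [hPV, AffineMap.image_convexHull, hPV']
    congr 1
    ext y
    constructor
    · rintro ⟨v, hv, rfl⟩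
      obtain ⟨v', h1, h2⟩ := hV v hv
      rw [AffineMap.comp_apply, ← h2, hρ' v' (hvP' _ h1)]
      exact h1
    · intro hy
      obtain ⟨v, h1, h2⟩ := hV' y hy
      refine ⟨v, h1, ?_⟩
      rw [AffineMap.comp_apply, h2, hρ' y (hvP' _ hy)]
  rw [← himg]
  refine latticeIso_mk P (ρ'.comp Φ) (ρ.comp Φ') ?_ ?_ ?_
  · intro x hx
    rw [AffineMap.comp_apply, AffineMap.comp_apply, (hf x hx).2, hρ x hx]
  · intro x hx hxl
    obtain ⟨x', h1, h2, h3⟩ := T x hx hxl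
    rw [AffineMap.comp_apply, ← h3, hρ' x' h1]
    exact h2
  · intro x hx hxl
    rw [AffineMap.comp_apply] at hxl
    obtain ⟨x', h1, h2, h3⟩ := T' _ (hf x hx).1 hxl
    rw [(hf x hx).2] at h3
    rwa [← hinj _ h1 _ hx h3]

theorem LatticeIso.trans {a b c : ℕ} {P : Set (Fin a → ℝ)} {Q : Set (Fin b → ℝ)}
    {R : Set (Fin c → ℝ)} (h1 : LatticeIso P Q) (h2 : LatticeIso Q R) : LatticeIso P R := by
  obtain ⟨f, g, e1, e2, e3, e4, e5, e6⟩ := h1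
  obtain ⟨f', g', i1, i2, i3, i4, i5, i6⟩ := h2
  have hm : ∀ x ∈ affineSpan ℝ P, f x ∈ affineSpan ℝ Q := by
    intro x hx
    rw [← e1, ← AffineSubspace.map_span]
    exact ⟨x, hx, rfl⟩
  have hm' : ∀ x ∈ affineSpan ℝ R, g' x ∈ affineSpan ℝ Q := by
    intro x hx
    rw [← i2, ← AffineSubspace.map_span]
    exact ⟨x, hx, rfl⟩
  refine ⟨f'.comp f, g.comp g', ?_, ?_, ?_, ?_, ?_, ?_⟩
  · rw [AffineMap.coe_comp, Set.image_comp, e1, i1]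
  · rw [AffineMap.coe_comp, Set.image_comp, i2, e2]
  · intro x hx
    simp only [AffineMap.comp_apply]
    rw [i3 _ (hm x hx), e3 x hx]
  · intro x hx
    simp only [AffineMap.comp_apply]
    rw [e4 _ (hm' x hx), i4 x hx]
  · intro x hx hxl
    exact i5 _ (hm x hx) (e5 x hx hxl)
  · intro x hx hxl
    exact e6 _ (hm' x hx) (i6 x hx hxl)

theorem exists_pad {d N : ℕ} (h : d ≤ N) (P : Set (Fin d → ℝ)) :
    ∃ Q : Set (Fin N → ℝ), LatticeIso P Q := by
  classical
  let f : (Fin d → ℝ) →ₗ[ℝ] (Fin N → ℝ) :=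
    LinearMap.pi fun j => if hj : (j : ℕ) < d then LinearMap.proj ⟨j, hj⟩ else 0
  let g : (Fin N → ℝ) →ₗ[ℝ] (Fin d → ℝ) := LinearMap.pi fun j => LinearMap.proj (Fin.castLE h j)
  have hgf : ∀ x, g (f x) = x := by
    intro x; ext j; simp [f, g]
  refine ⟨_, latticeIso_mk P f.toAffineMap g.toAffineMap (fun x _ => hgf x) ?_ ?_⟩
  · intro x _ hx j
    by_cases hj : (j : ℕ) < d
    · simpa [f, hj] using hx ⟨j, hj⟩
    · exact ⟨0, by simp [f, hj]⟩
  · intro x _ hx j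
    have := hx (Fin.castLE h j)
    simpa [f] using this

theorem finite_charts (L B : ℕ) : ∃ (k N : ℕ) (Q : Fin k → Set (Fin N → ℝ)),
    ∀ (d : ℕ) (P : Set (Fin d → ℝ)), (∃ V Φ, GoodChart L B P V Φ) → ∃ i, LatticeIso P (Q i) := by
  classical
  set M := B + (B + 1) ^ L * B with hM
  let X := Fin L → Finset.Icc (-(M : ℤ)) M
  let Code := Set X × Set X
  let val : X → Fin L → ℝ := fun z j => ((z j : ℤ) : ℝ)
  let HasCode : Code → (d : ℕ) → Set (Fin d → ℝ) → Prop := fun c d P =>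
    ∃ V Φ, GoodChart L B P V Φ ∧ c = ({z | ∃ v ∈ V, Φ v = val z},
      {z | ∃ y ∈ affineSpan ℝ P, IsLatticePt y ∧ Φ y = val z})
  have hval : ∀ y : Fin L → ℝ, IsLatticePt y → (∀ j, |y j| ≤ M) → ∃ z : X, y = val z := by
    intro y hy hb
    choose z hz using hy
    refine ⟨fun j => ⟨z j, ?_⟩, funext hz⟩
    have := hb j
    rw [hz, abs_le] at this
    rw [Finset.mem_Icc]
    exact ⟨by exact_mod_cast this.1, by exact_mod_cast this.2⟩
  have hsub : ∀ {c d P d' P'}, HasCode c d P → HasCode c d' P' → LatticeIso P P' := by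
    rintro c d P d' P' ⟨V, Φ, C, hc⟩ ⟨V', Φ', C', hc'⟩
    rw [hc, Prod.mk.injEq] at hc'
    obtain ⟨h1, h2⟩ := hc'
    have key : ∀ {d : ℕ} {P : Set (Fin d → ℝ)} {V : Finset (Fin d → ℝ)}
        {Φ : (Fin d → ℝ) →ᵃ[ℝ] (Fin L → ℝ)}, GoodChart L B P V Φ → ∀ v ∈ V, ∃ z : X, Φ v = val z := by
      intro d P V Φ C v hv
      refine hval _ (fun j => ?_) (fun j => ?_)
      · obtain ⟨b, -, hb⟩ := C.2.2.2.1 v hv j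
        exact ⟨b, by rw [hb]; simp⟩
      · obtain ⟨b, hb1, hb⟩ := C.2.2.2.1 v hv j
        rw [hb, abs_of_nonneg (by positivity)]
        exact_mod_cast hb1.trans (by rw [hM]; exact Nat.le_add_right _ _)
    refine iso_of_charts hM.ge C C' ?_ ?_ ?_ ?_
    · intro v hv
      obtain ⟨z, hz⟩ := key C v hv
      have : z ∈ {z | ∃ v ∈ V, Φ v = val z} := ⟨v, hv, hz⟩
      rw [h1] at this
      obtain ⟨v', a, b⟩ := this
      exact ⟨v', a, b.trans hz.symm⟩
    · intro v hv
      obtain ⟨z, hz⟩ := key C' v hv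
      have : z ∈ {z | ∃ v ∈ V', Φ' v = val z} := ⟨v, hv, hz⟩
      rw [← h1] at this
      obtain ⟨v', a, b⟩ := this
      exact ⟨v', a, b.trans hz.symm⟩
    · intro y hy hyl hb
      obtain ⟨z, hz⟩ := hval _ (C.2.2.2.2.1 y hy hyl) hb
      have : z ∈ {z | ∃ y ∈ affineSpan ℝ P, IsLatticePt y ∧ Φ y = val z} := ⟨y, hy, hyl, hz⟩
      rw [h2] at this
      obtain ⟨y', a, b, e⟩ := this
      exact ⟨y', a, b, e.trans hz.symm⟩
    · intro y hy hyl hb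
      obtain ⟨z, hz⟩ := hval _ (C'.2.2.2.2.1 y hy hyl) hb
      have : z ∈ {z | ∃ y ∈ affineSpan ℝ P', IsLatticePt y ∧ Φ' y = val z} := ⟨y, hy, hyl, hz⟩
      rw [← h2] at this
      obtain ⟨y', a, b, e⟩ := this
      exact ⟨y', a, b, e.trans hz.symm⟩
  have hrep : ∀ c : Code, ∃ (d : ℕ) (P : Set (Fin d → ℝ)),
      (∃ d' P', HasCode c d' P') → HasCode c d P := by
    intro c
    by_cases h : ∃ d' P', HasCode c d' P'
    · obtain ⟨d, P, hP⟩ := h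
      exact ⟨d, P, fun _ => hP⟩
    · exact ⟨0, ∅, fun h' => absurd h' h⟩
  choose D R hR using hrep
  let N := Finset.univ.sup D
  have hDN : ∀ c, D c ≤ N := fun c => Finset.le_sup (Finset.mem_univ c)
  choose Q hQ using fun c => exists_pad (hDN c) (R c)
  let e := Fintype.equivFin Code
  refine ⟨Fintype.card Code, N, fun i => Q (e.symm i), ?_⟩
  rintro d P ⟨V, Φ, C⟩
  let c : Code := ({z | ∃ v ∈ V, Φ v = val z},
      {z | ∃ y ∈ affineSpan ℝ P, IsLatticePt y ∧ Φ y = val z})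
  have hc : HasCode c d P := ⟨V, Φ, C, rfl⟩
  refine ⟨e c, ?_⟩
  simp only [Equiv.symm_apply_apply]
  exact (hsub hc (hR c ⟨d, P, hc⟩)).trans (hQ c)

theorem stmt16 (s : ℕ) (hs : 0 < s) :
    ∃ (k N : ℕ) (Q : Fin k → Set (Fin N → ℝ)),
      ∀ (d : ℕ) (P : Set (Fin d → ℝ)), IsLatticePolytope P → IsGorenstein P →
        polyDeg P = s → ¬ IsLatticePyramid P → ∃ i, LatticeIso P (Q i) := by
  obtain ⟨L, B, h⟩ := gor_chart s hs
  obtain ⟨k, N, Q, hQ⟩ := finite_charts L B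
  exact ⟨k, N, Q, fun d P h1 h2 h3 h4 => hQ d P (h d P h1 h2 h3 h4)⟩
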